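/- There exist universal constants K ≥ 1, C₁ ≥ 1, C₂ ≥ 1 and c > 0 such that the following holds. Let n ≥ 2, k ≥ n, α ≥ 10, γ ≥ 1, and set s = α/√n. Let G be an n×n standard Gaussian random matrix and u, v ∈ ℝⁿ standard Gaussian random vectors, all mutually independent. Run a deterministic t-round adaptive algorithm making k linear measurements per round on the input vec(G) + s·(u⊗v) ∈ ℝ^{n²}, and let Q ∈ ℝ^{tk×n²} be the (random) matrix obtained by stacking all query matrices realized along the run (its rows are orthonormal). Then for every t such that C₁·k·log n ≤ (K·α²·γ²)ᵗ·k and (K·α²·γ²)ᵗ·k ≤ C₂·n², we have Pr[‖Q(u⊗v)‖² ≤ 3K·k·(K·α²·γ²)ᵗ] ≥ (1 − 1/(10γ))ᵗ − n^{−c}. -/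

import Mathlib

/-!
The information `‖Q (u ⊗ v)‖²` collected so far grows by at most a factor `β = K α² γ²` per round,
except with small probability. With the thresholds `T_j = 3 K k β ^ j`, a failure means that
`‖u‖² > 6 n`, which has probability at most `1 / n` (`sqNorm_tail`), or that in some round the
information passes from at most `T_j` to more than `T_{j+1}` while `‖u‖² ≤ 6 n`.

For one round, compare the responses with independent standard Gaussian responses. Since the
queries have orthonormal rows, the history of the first `j` rounds on the input `G + s (u ⊗ v)` has
an explicit density with respect to Gaussian responses (`QueryMaps.lik`,
`QueryMaps.Valid.lintegral_hist`), obtained by induction on the rounds from the rotation invariance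
of the Gaussian measure and the Cameron–Martin formula. The square of this density is `exp (s² I)`
times the density for the doubled plant, where `I` is the information collected so far, so on the
event `I ≤ T_j` its second moment is at most `exp (s² T_j)`. A truncation argument
(`truncated_likelihood`) then shows that the posterior of `(u, v)` is no more concentrated than the
prior up to a factor `exp (s² T_j + 2 b)`, outside an event of probability `2 exp (-b)`. Under the
prior and for fixed orthonormal queries, `‖R (u ⊗ v)‖²` has exponential tails at scale `n`
(`prior_tail`, a twofold Gaussian quadratic-form estimate), and `T_{j+1}` is large enough to beat
that factor (`step_numeric`). The failure probabilities decrease geometrically in `j` and sum to at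
most `1 / (10 γ)`; this yields the claim because `(1 - 1 / (10 γ)) ^ t ≤ 1 - 1 / (10 γ)` for
`t ≥ 1`. The constants are `K = 120` and `c = 1`.
-/

open MeasureTheory ProbabilityTheory Matrix
open scoped ENNReal Classical

noncomputable section

/-- Squared Euclidean norm of a finitely-indexed real vector. -/
def sqNorm {ι : Type*} [Fintype ι] (x : ι → ℝ) : ℝ := ∑ i, x i ^ 2

/-- Squared Frobenius norm of a real matrix. -/
def frobSq {m n : Type*} [Fintype m] [Fintype n] (A : Matrix m n ℝ) : ℝ :=
  ∑ i, ∑ j, A i j ^ 2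

/-- Spectral (ℓ₂ operator) norm of a real matrix. -/
def specNorm {m n : Type*} [Fintype m] [Fintype n] (A : Matrix m n ℝ) : ℝ :=
  sSup ((fun x : n → ℝ => Real.sqrt (sqNorm (A.mulVec x))) '' {x | sqNorm x ≤ 1})

/-- `i`-th largest singular value (1-based), characterized via
`σ_i(A) = min {‖A − X‖ : rank X ≤ i − 1}`. -/
def singVal {m n : Type*} [Fintype m] [Fintype n] (A : Matrix m n ℝ) (i : ℕ) : ℝ :=
  sInf {c | ∃ X : Matrix m n ℝ, X.rank ≤ i - 1 ∧ c = specNorm (A - X)}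

/-- Flattening of an `n × n` matrix into a vector in `ℝ^{n²}`. -/
def vec (n : ℕ) (A : Matrix (Fin n) (Fin n) ℝ) : Fin (n * n) → ℝ :=
  fun i => A (finProdFinEquiv.symm i).1 (finProdFinEquiv.symm i).2

/-- `u ⊗ v = vec (u vᵀ) ∈ ℝ^{n²}`. -/
def tensor {n : ℕ} (u v : Fin n → ℝ) : Fin (n * n) → ℝ :=
  vec n (Matrix.of fun i j => u i * v j)

/-- Standard Gaussian measure on `ι → ℝ`. -/
def stdGaussian (ι : Type*) [Fintype ι] : Measure (ι → ℝ) :=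
  Measure.pi fun _ => gaussianReal 0 1

/-- Standard Gaussian measure on `n × n` matrices (as `Fin n → Fin n → ℝ`). -/
def stdGaussianMat (n : ℕ) : Measure (Fin n → Fin n → ℝ) :=
  Measure.pi fun _ => stdGaussian (Fin n)

/-- Query maps of a deterministic `t`-round adaptive algorithm making `k` linear
measurements per round on inputs in `ℝ^N`. -/
def QueryMaps (N k t : ℕ) : Type :=
  (j : Fin t) → (Fin (j : ℕ) → (Fin k → ℝ)) → Matrix (Fin k) (Fin N) ℝ

namespace QueryMaps

variable {N k t : ℕ}

/-- Restriction of a round-`j` history to the first `i` rounds. -/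
def prefixHist {j : Fin t} (h : Fin (j : ℕ) → Fin k → ℝ) {i : Fin t}
    (hij : (i : ℕ) < (j : ℕ)) : Fin (i : ℕ) → Fin k → ℝ :=
  fun l => h ⟨l.1, l.isLt.trans hij⟩

/-- Validity of query maps: measurability, orthonormal rows within each round, and
orthogonality across rounds along consistent histories. -/
def Valid (Q : QueryMaps N k t) : Prop :=
  (∀ (j : Fin t) (i : Fin k) (l : Fin N), Measurable fun h => Q j h i l) ∧
  (∀ (j : Fin t) (h : Fin (j : ℕ) → Fin k → ℝ), Q j h * (Q j h)ᵀ = 1) ∧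
  (∀ (j i : Fin t) (hij : (i : ℕ) < (j : ℕ)) (h : Fin (j : ℕ) → Fin k → ℝ),
      Q j h * (Q i (prefixHist h hij))ᵀ = 0)

/-- Responses of the algorithm under exact linear measurements of `a`. -/
def resp (Q : QueryMaps N k t) (a : Fin N → ℝ) (j : Fin t) : Fin k → ℝ :=
  (Q j fun i => resp Q a ⟨i.1, i.isLt.trans j.isLt⟩).mulVec a
termination_by (j : ℕ)
decreasing_by exact i.isLt

/-- Responses of the algorithm under noisy linear measurements of `a`, with fresh
per-round noise `g`. -/
def nresp (Q : QueryMaps N k t) (a : Fin N → ℝ) (g : Fin t → Fin k → ℝ) (j : Fin t) :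
    Fin k → ℝ :=
  ((Q j fun i => nresp Q a g ⟨i.1, i.isLt.trans j.isLt⟩).mulVec a) + g j
termination_by (j : ℕ)
decreasing_by exact i.isLt

/-- The `tk × N` matrix stacking all the query matrices realized along the run of the
algorithm on input `a` (exact measurements). -/
def runMat (Q : QueryMaps N k t) (a : Fin N → ℝ) : Matrix (Fin t × Fin k) (Fin N) ℝ :=
  Matrix.of fun p l =>
    Q p.1 (fun i => resp Q a ⟨i.1, i.isLt.trans p.1.isLt⟩) p.2 l

end QueryMaps

/-- Kullback–Leibler divergence, valued in `[0, ∞]`, defined with the natural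
logarithm. -/
def klDiv {Ω : Type*} [MeasurableSpace Ω] (P Q : Measure Ω) : ℝ≥0∞ :=
  if P ≪ Q ∧ Integrable (fun x => Real.log ((P.rnDeriv Q x).toReal)) P then
    ENNReal.ofReal (∫ x, Real.log ((P.rnDeriv Q x).toReal) ∂P)
  else ⊤


/-- The rank-`r` plant `Σ_{i=1}^r uᵢ vᵢᵀ` built from the rows of `U` and `V`. -/
def plant {n r : ℕ} (U V : Fin r → Fin n → ℝ) : Matrix (Fin n) (Fin n) ℝ :=
  Matrix.of fun i j => ∑ l, U l i * V l j

/-- Schatten-`p` norm (real `p`), via the singular values. -/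
def schattenNorm {n : ℕ} (p : ℝ) (A : Matrix (Fin n) (Fin n) ℝ) : ℝ :=
  (∑ i ∈ Finset.range n, singVal A (i + 1) ^ p) ^ (1 / p)

/-- Ky-Fan `p` norm: sum of the `p` largest singular values. -/
def kyFanNorm {n : ℕ} (p : ℕ) (A : Matrix (Fin n) (Fin n) ℝ) : ℝ :=
  ∑ i ∈ Finset.range p, singVal A (i + 1)

/-! ### Standard Gaussian vectors -/

instance isProbabilityMeasure_stdG (ι : Type*) [Fintype ι] :
    IsProbabilityMeasure (_root_.stdGaussian ι) := by
  unfold _root_.stdGaussian; infer_instance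

instance isProbabilityMeasure_stdGMat (n : ℕ) :
    IsProbabilityMeasure (stdGaussianMat n) := by
  unfold stdGaussianMat; infer_instance

lemma lintegral_pi_prod {ι : Type*} [Fintype ι] (μ : ι → Measure ℝ)
    [∀ i, IsProbabilityMeasure (μ i)] (f : ι → ℝ → ℝ≥0∞) (hf : ∀ i, Measurable (f i)) :
    ∫⁻ x, ∏ i, f i (x i) ∂(Measure.pi μ) = ∏ i, ∫⁻ y, f i y ∂(μ i) := by
  have h1 := lintegral_prod_eq_prod_lintegral_of_indepFun (μ := Measure.pi μ) Finset.univ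
    (fun i (x : ι → ℝ) => f i (x i)) (iIndepFun_pi (fun i => (hf i).aemeasurable))
    (fun i => (hf i).comp (measurable_pi_apply i))
  rw [h1]
  refine Finset.prod_congr rfl fun i _ => ?_
  exact (measurePreserving_eval μ i).lintegral_comp (hf i)

lemma sqNorm_eq_dotProduct {ι : Type*} [Fintype ι] (x : ι → ℝ) : sqNorm x = x ⬝ᵥ x := by
  simp [sqNorm, dotProduct, sq]

lemma sqNorm_nonneg {ι : Type*} [Fintype ι] (x : ι → ℝ) : 0 ≤ sqNorm x :=
  Finset.sum_nonneg fun _ _ => sq_nonneg _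

lemma measurable_mulVec {ι κ : Type*} [Fintype κ] (M : Matrix ι κ ℝ) :
    Measurable (fun x : κ → ℝ => M.mulVec x) := by
  refine measurable_pi_iff.2 fun i => ?_
  simp only [mulVec, dotProduct]
  fun_prop

/-- A linear map with orthonormal rows (a co-isometry) maps the standard Gaussian measure to the
standard Gaussian measure; checked on characteristic functions. -/
lemma map_mulVec_stdG {ι κ : Type*} [Fintype ι] [DecidableEq ι] [Fintype κ]
    (M : Matrix ι κ ℝ) (hM : M * Mᵀ = 1) :
    (_root_.stdGaussian κ).map (fun x => M.mulVec x) = _root_.stdGaussian ι := by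
  have key : ((_root_.stdGaussian κ).map (fun x => M.mulVec x)).map
      (WithLp.toLp 2 : (ι → ℝ) → EuclideanSpace ℝ ι)
      = (_root_.stdGaussian ι).map (WithLp.toLp 2) := by
    apply Measure.ext_of_charFun (E := EuclideanSpace ℝ ι)
    ext ξ
    have e1 : charFun (((_root_.stdGaussian κ).map (fun x => M.mulVec x)).map
        (WithLp.toLp 2 : (ι → ℝ) → EuclideanSpace ℝ ι)) ξ
        = charFun ((_root_.stdGaussian κ).map (WithLp.toLp 2 : (κ → ℝ) → EuclideanSpace ℝ κ))
            (WithLp.toLp 2 (Mᵀ.mulVec ξ.ofLp)) := by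
      rw [Measure.map_map (by fun_prop) (measurable_mulVec M), charFun_apply, charFun_apply,
        integral_map (by
          exact (Measurable.comp (by fun_prop) (measurable_mulVec M)).aemeasurable)
          (Measurable.aestronglyMeasurable (by fun_prop)),
        integral_map (Measurable.aemeasurable (by fun_prop))
          (Measurable.aestronglyMeasurable (by fun_prop))]
      refine integral_congr_ae (Filter.Eventually.of_forall fun x => ?_)
      simp only [Function.comp, EuclideanSpace.inner_eq_star_dotProduct]
      simp only [star_trivial]
      rw [Matrix.mulVec_transpose, ← Matrix.dotProduct_mulVec]
    rw [e1]
    unfold _root_.stdGaussian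
    rw [charFun_pi, charFun_pi]
    simp_rw [charFun_gaussianReal, ← Complex.exp_sum]
    congr 1
    have h2 : sqNorm (Mᵀ.mulVec ξ.ofLp) = sqNorm ξ.ofLp := by
      rw [sqNorm_eq_dotProduct, sqNorm_eq_dotProduct, Matrix.mulVec_transpose,
        ← Matrix.dotProduct_mulVec, ← Matrix.mulVec_transpose, Matrix.mulVec_mulVec, hM,
        Matrix.one_mulVec]
    have h3 : ((sqNorm (Mᵀ.mulVec ξ.ofLp) : ℝ) : ℂ) = (sqNorm ξ.ofLp : ℝ) := by rw [h2]
    simp only [sqNorm, Complex.ofReal_sum, Complex.ofReal_pow] at h3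
    simp only [Complex.ofReal_zero, mul_zero, zero_mul, NNReal.coe_one, Complex.ofReal_one,
      one_mul, zero_sub, Finset.sum_neg_distrib, ← Finset.sum_div]
    rw [h3]
  have hback : ∀ μ : Measure (ι → ℝ), (μ.map (WithLp.toLp 2 : (ι → ℝ) → EuclideanSpace ℝ ι)).map
      (WithLp.ofLp : EuclideanSpace ℝ ι → (ι → ℝ)) = μ := by
    intro μ
    rw [Measure.map_map (by fun_prop) (by fun_prop)]
    exact Measure.map_id
  rw [← hback ((_root_.stdGaussian κ).map (fun x => M.mulVec x)), key, hback]

/-- Splitting a standard Gaussian along orthonormal rows `A`: `Aᵀ g + (1 - AᵀA) y` is standard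
Gaussian when `g` and `y` are independent standard Gaussians. -/
lemma lintegral_stdG_split {k N : ℕ} (A : Matrix (Fin k) (Fin N) ℝ) (hA : A * Aᵀ = 1)
    (f : (Fin N → ℝ) → ℝ≥0∞) (hf : Measurable f) :
    ∫⁻ y, f y ∂(_root_.stdGaussian (Fin N))
      = ∫⁻ y, ∫⁻ g, f (y + Aᵀ.mulVec (g - A.mulVec y)) ∂(_root_.stdGaussian (Fin k))
          ∂(_root_.stdGaussian (Fin N)) := by
  set M : Matrix (Fin N) (Fin N ⊕ Fin k) ℝ := Matrix.fromCols (1 - Aᵀ * A) Aᵀ with hMdef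
  have hM : M * Mᵀ = 1 := by
    have h1 : Aᵀ * A * (Aᵀ * A) = Aᵀ * A := by
      rw [Matrix.mul_assoc, ← Matrix.mul_assoc A, hA, Matrix.one_mul]
    rw [hMdef, Matrix.transpose_fromCols, Matrix.fromCols_mul_fromRows]
    simp only [Matrix.transpose_sub, Matrix.transpose_one, Matrix.transpose_mul,
      Matrix.transpose_transpose]
    rw [Matrix.mul_sub, Matrix.sub_mul, Matrix.sub_mul, h1]
    simp
  have e0 : ∫⁻ y, f y ∂(_root_.stdGaussian (Fin N))
      = ∫⁻ a, f (M.mulVec a) ∂(_root_.stdGaussian (Fin N ⊕ Fin k)) := by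
    rw [← map_mulVec_stdG M hM, lintegral_map hf (measurable_mulVec M)]
  have hmp := measurePreserving_sumPiEquivProdPi_symm
    (fun _ : Fin N ⊕ Fin k => gaussianReal 0 1)
  have e := hmp.lintegral_comp (f := fun a => f (M.mulVec a)) (hf.comp (measurable_mulVec M))
  rw [e0]
  refine e.symm.trans ?_
  rw [lintegral_prod]
  · refine lintegral_congr fun y => lintegral_congr fun g => ?_
    congr 1
    have h5 : ((MeasurableEquiv.sumPiEquivProdPi fun _ : Fin N ⊕ Fin k => ℝ).symm (y, g))
        = Sum.elim y g := by
      ext i; cases i <;> rfl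
    rw [h5, hMdef, Matrix.fromCols_mulVec]
    simp only [Sum.elim_comp_inl, Sum.elim_comp_inr, Matrix.sub_mulVec, Matrix.one_mulVec,
      Matrix.mulVec_sub, Matrix.mulVec_mulVec]
    abel
  · exact ((hf.comp (measurable_mulVec M)).comp (MeasurableEquiv.measurable _)).aemeasurable

lemma lintegral_gaussianReal {μ : ℝ} {v : NNReal} (hv : v ≠ 0) (f : ℝ → ℝ≥0∞)
    (hf : Measurable f) :
    ∫⁻ x, f x ∂(gaussianReal μ v) = ∫⁻ x, gaussianPDF μ v x * f x := by
  rw [gaussianReal_of_var_ne_zero _ hv, lintegral_withDensity_eq_lintegral_mul _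
    (measurable_gaussianPDF _ _) hf]
  rfl

/-- Exponential moment of the square of a standard Gaussian variable. -/
lemma lintegral_exp_sq_le (d : ℝ) (h0 : 0 ≤ d) (h1 : d ≤ 1 / 4) :
    ∫⁻ x, ENNReal.ofReal (Real.exp (d * x ^ 2)) ∂(gaussianReal 0 1)
      ≤ ENNReal.ofReal (Real.exp (2 * d)) := by
  have hp : 0 < 1 - 2 * d := by linarith
  set v : NNReal := ⟨(1 - 2 * d)⁻¹, by positivity⟩ with hv
  have hvv : (v : ℝ) = (1 - 2 * d)⁻¹ := rfl
  have hv0 : v ≠ 0 := by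
    intro h
    have : (v : ℝ) = 0 := by rw [h]; rfl
    rw [hvv] at this
    exact (inv_pos.2 hp).ne' this
  rw [lintegral_gaussianReal one_ne_zero _ (by fun_prop)]
  have hs : 0 < Real.sqrt (1 - 2 * d) := Real.sqrt_pos.2 hp
  have e : ∀ x, gaussianPDF 0 1 x * ENNReal.ofReal (Real.exp (d * x ^ 2))
      = ENNReal.ofReal ((Real.sqrt (1 - 2 * d))⁻¹) * gaussianPDF 0 v x := by
    intro x
    rw [gaussianPDF, gaussianPDF, ← ENNReal.ofReal_mul (gaussianPDFReal_nonneg _ _ _),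
      ← ENNReal.ofReal_mul (by positivity)]
    congr 1
    simp only [gaussianPDFReal, hvv, NNReal.coe_one]
    rw [mul_assoc, ← Real.exp_add, ← mul_assoc]
    congr 1
    · rw [Real.sqrt_mul (by positivity), Real.sqrt_mul (by positivity) (1 - 2 * d)⁻¹,
        Real.sqrt_inv]
      field_simp
      simp
    · congr 1
      field_simp
      ring
  simp_rw [e]
  rw [lintegral_const_mul _ (measurable_gaussianPDF _ _), lintegral_gaussianPDF_eq_one _ hv0,
    mul_one]
  apply ENNReal.ofReal_le_ofReal
  rw [inv_le_comm₀ hs (Real.exp_pos _), ← Real.exp_neg]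
  apply Real.le_sqrt_of_sq_le
  rw [← Real.exp_nat_mul]
  have h4 : Real.exp (((2 : ℕ) : ℝ) * -(2 * d)) = (Real.exp (4 * d))⁻¹ := by
    rw [← Real.exp_neg]; congr 1; push_cast; ring
  rw [h4, inv_le_comm₀ (Real.exp_pos _) hp]
  have h5 := Real.add_one_le_exp (4 * d)
  refine le_trans ?_ h5
  rw [inv_le_iff_one_le_mul₀ hp]
  nlinarith

/-- Cameron–Martin formula for the standard Gaussian measure on `ℝ^ι`. -/
lemma lintegral_stdG_shift {ι : Type*} [Fintype ι] (c : ι → ℝ) (f : (ι → ℝ) → ℝ≥0∞)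
    (hf : Measurable f) :
    ∫⁻ g, f (g + c) ∂(_root_.stdGaussian ι)
      = ∫⁻ w, f w * ENNReal.ofReal (Real.exp (c ⬝ᵥ w - sqNorm c / 2))
          ∂(_root_.stdGaussian ι) := by
  have hden : ∀ w : ι → ℝ, ENNReal.ofReal (Real.exp (c ⬝ᵥ w - sqNorm c / 2))
      = ∏ i, ENNReal.ofReal (Real.exp (c i * w i - c i ^ 2 / 2)) := by
    intro w
    rw [← ENNReal.ofReal_prod_of_nonneg (fun i _ => (Real.exp_pos _).le), ← Real.exp_sum]
    simp [dotProduct, sqNorm, Finset.sum_sub_distrib, Finset.sum_div]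
  have hmeas : Measurable fun w : ι → ℝ =>
      ENNReal.ofReal (Real.exp (c ⬝ᵥ w - sqNorm c / 2)) := by
    simp only [dotProduct]; fun_prop
  have hmap : (_root_.stdGaussian ι).map (fun g => g + c)
      = (_root_.stdGaussian ι).withDensity
          (fun w => ENNReal.ofReal (Real.exp (c ⬝ᵥ w - sqNorm c / 2))) := by
    have h1 : (_root_.stdGaussian ι).map (fun g => g + c)
        = Measure.pi (fun i => gaussianReal (c i) 1) := by
      have := Measure.pi_map_pi (μ := fun _ : ι => gaussianReal 0 1)
        (f := fun i x => x + c i) (fun i => by fun_prop)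
      simp_rw [gaussianReal_map_add_const, zero_add] at this
      exact this
    rw [h1]
    apply Measure.pi_eq
    intro s hs
    rw [withDensity_apply _ (MeasurableSet.univ_pi hs), ← lintegral_indicator
      (MeasurableSet.univ_pi hs)]
    have h2 : ∀ w : ι → ℝ, (Set.univ.pi s).indicator
        (fun w => ENNReal.ofReal (Real.exp (c ⬝ᵥ w - sqNorm c / 2))) w
        = ∏ i, (s i).indicator
          (fun x => ENNReal.ofReal (Real.exp (c i * x - c i ^ 2 / 2))) (w i) := by
      intro w
      by_cases hw : w ∈ Set.univ.pi s
      · rw [Set.indicator_of_mem hw, hden]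
        exact Finset.prod_congr rfl fun i _ =>
          (Set.indicator_of_mem (hw i (Set.mem_univ i))
            (fun x => ENNReal.ofReal (Real.exp (c i * x - c i ^ 2 / 2)))).symm
      · rw [Set.indicator_of_notMem hw]
        simp only [Set.mem_pi, Set.mem_univ, true_imp_iff, not_forall] at hw
        obtain ⟨i, hi⟩ := hw
        exact (Finset.prod_eq_zero (Finset.mem_univ i) (Set.indicator_of_notMem hi _)).symm
    simp_rw [h2]
    rw [_root_.stdGaussian, lintegral_pi_prod _ (fun i => (s i).indicator
          (fun x => ENNReal.ofReal (Real.exp (c i * x - c i ^ 2 / 2))))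
        (fun i => Measurable.indicator (by fun_prop) (hs i))]
    refine Finset.prod_congr rfl fun i _ => ?_
    rw [lintegral_gaussianReal one_ne_zero _ (Measurable.indicator (by fun_prop) (hs i)),
      gaussianReal_apply _ one_ne_zero, ← lintegral_indicator (hs i)]
    refine lintegral_congr fun x => ?_
    by_cases hx : x ∈ s i
    · rw [Set.indicator_of_mem hx, Set.indicator_of_mem hx, gaussianPDF, gaussianPDF,
        ← ENNReal.ofReal_mul (gaussianPDFReal_nonneg _ _ _)]
      congr 1
      simp only [gaussianPDFReal]
      rw [mul_assoc, ← Real.exp_add]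
      congr 2
      simp only [NNReal.coe_one]
      ring
    · simp [hx]
  rw [← lintegral_map hf (by fun_prop), hmap, lintegral_withDensity_eq_lintegral_mul _ hmeas hf]
  exact lintegral_congr fun w => mul_comm _ _

/-- The flattening of a standard Gaussian matrix is a standard Gaussian vector. -/
lemma map_vec_stdGaussianMat (n : ℕ) :
    (stdGaussianMat n).map (fun A => vec n (Matrix.of A)) = _root_.stdGaussian (Fin (n * n)) := by
  have hm : Measurable (fun A : Fin n → Fin n → ℝ => vec n (Matrix.of A)) := by
    refine measurable_pi_iff.2 fun i => ?_
    simp only [_root_.vec, Matrix.of_apply]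
    fun_prop
  symm
  apply Measure.pi_eq
  intro s hs
  rw [Measure.map_apply hm (MeasurableSet.univ_pi hs)]
  have : (fun A : Fin n → Fin n → ℝ => vec n (Matrix.of A)) ⁻¹' (Set.univ.pi s)
      = Set.univ.pi fun i => Set.univ.pi fun j => s (finProdFinEquiv (i, j)) := by
    ext A
    simp only [Set.mem_preimage, Set.mem_pi, Set.mem_univ, true_imp_iff, _root_.vec, Matrix.of_apply]
    constructor
    · intro h i j
      simpa using h (finProdFinEquiv (i, j))
    · intro h i
      have := h (finProdFinEquiv.symm i).1 (finProdFinEquiv.symm i).2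
      rwa [Prod.mk.eta, Equiv.apply_symm_apply] at this
  rw [this, stdGaussianMat, Measure.pi_pi]
  simp_rw [_root_.stdGaussian, Measure.pi_pi]
  rw [← Fintype.prod_prod_type' (f := fun i j => (gaussianReal 0 1) (s (finProdFinEquiv (i, j))))]
  exact Fintype.prod_equiv finProdFinEquiv _ _ (fun _ => rfl)

/-! ### Tail bounds for the plant -/

lemma measurable_sqNorm {ι : Type*} [Fintype ι] : Measurable (sqNorm : (ι → ℝ) → ℝ) := by
  unfold sqNorm; fun_prop

/-- Exponential moment of the Gaussian quadratic form `‖B x‖²`: diagonalise `BᵀB` and use the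
rotation invariance of the Gaussian measure. -/
lemma lintegral_exp_sqNorm_mulVec_le {μ ι : Type*} [Fintype μ] [Fintype ι] [DecidableEq ι]
    (B : Matrix μ ι ℝ) (lam θ : ℝ) (hθ : 0 ≤ θ)
    (hop : ∀ x, sqNorm (B.mulVec x) ≤ lam * sqNorm x) (hlam : θ * lam ≤ 1 / 4) :
    ∫⁻ x, ENNReal.ofReal (Real.exp (θ * sqNorm (B.mulVec x))) ∂(_root_.stdGaussian ι)
      ≤ ENNReal.ofReal (Real.exp (2 * θ * frobSq B)) := by
  have hP : (Bᵀ * B).PosSemidef := by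
    have := Matrix.posSemidef_conjTranspose_mul_self B
    rwa [Matrix.conjTranspose_eq_transpose_of_trivial] at this
  have hH := hP.1
  set U : Matrix ι ι ℝ := (hH.eigenvectorUnitary : Matrix ι ι ℝ) with hU
  set d := hH.eigenvalues with hd
  have hUU : Uᵀ * Uᵀᵀ = 1 := by
    have := Unitary.coe_star_mul_self hH.eigenvectorUnitary
    rw [Matrix.star_eq_conjTranspose, Matrix.conjTranspose_eq_transpose_of_trivial] at this
    simpa using this
  have hspec : Bᵀ * B = U * diagonal d * Uᵀ := by
    have := hH.spectral_theorem
    rw [Unitary.conjStarAlgAut_apply] at this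
    rw [Matrix.star_eq_conjTranspose, Matrix.conjTranspose_eq_transpose_of_trivial] at this
    exact this
  have hq : ∀ x, sqNorm (B.mulVec x) = ∑ i, d i * (Uᵀ.mulVec x) i ^ 2 := by
    intro x
    have h1 : sqNorm (B.mulVec x) = x ⬝ᵥ (Bᵀ * B).mulVec x := by
      rw [sqNorm_eq_dotProduct, ← Matrix.mulVec_mulVec, Matrix.dotProduct_mulVec x Bᵀ,
        Matrix.vecMul_transpose]
    rw [h1, hspec, ← Matrix.mulVec_mulVec, ← Matrix.mulVec_mulVec, Matrix.dotProduct_mulVec,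
      ← Matrix.mulVec_transpose]
    simp only [dotProduct, Matrix.mulVec_diagonal]
    exact Finset.sum_congr rfl fun i _ => by ring
  have hd0 : ∀ i, 0 ≤ d i := fun i => hP.eigenvalues_nonneg i
  have hd1 : ∀ i, d i ≤ lam := by
    intro i
    have h2 := hop (U.mulVec (Pi.single i 1))
    have h3 : Uᵀ.mulVec (U.mulVec (Pi.single i 1)) = Pi.single i 1 := by
      rw [Matrix.mulVec_mulVec, show Uᵀ * U = 1 by simpa using hUU, Matrix.one_mulVec]
    have h4 : sqNorm (U.mulVec (Pi.single i 1)) = 1 := by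
      rw [sqNorm_eq_dotProduct, Matrix.dotProduct_mulVec, ← Matrix.mulVec_transpose, h3]
      simp
    rw [hq, h3, h4] at h2
    simpa [Pi.single_apply] using h2
  have htr : frobSq B = ∑ i, d i := by
    have h5 := hH.trace_eq_sum_eigenvalues
    simp only [RCLike.ofReal_real_eq_id, id] at h5
    rw [hd, ← h5]
    simp only [frobSq, Matrix.trace, Matrix.diag, Matrix.mul_apply, Matrix.transpose_apply]
    rw [Finset.sum_comm]
    exact Finset.sum_congr rfl fun i _ => Finset.sum_congr rfl fun j _ => by ring
  have hexp : ∀ y : ι → ℝ, ENNReal.ofReal (Real.exp (θ * ∑ i, d i * y i ^ 2))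
      = ∏ i, ENNReal.ofReal (Real.exp (θ * d i * y i ^ 2)) := by
    intro y
    rw [← ENNReal.ofReal_prod_of_nonneg (fun i _ => (Real.exp_pos _).le), ← Real.exp_sum,
      Finset.mul_sum]
    simp [mul_assoc]
  calc ∫⁻ x, ENNReal.ofReal (Real.exp (θ * sqNorm (B.mulVec x))) ∂(_root_.stdGaussian ι)
      = ∫⁻ y, ENNReal.ofReal (Real.exp (θ * ∑ i, d i * y i ^ 2)) ∂(_root_.stdGaussian ι) := by
        conv_rhs => rw [← map_mulVec_stdG Uᵀ hUU]
        rw [lintegral_map (by fun_prop) (measurable_mulVec _)]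
        simp_rw [hq]
    _ = ∏ i, ∫⁻ y, ENNReal.ofReal (Real.exp (θ * d i * y ^ 2)) ∂(gaussianReal 0 1) := by
        simp_rw [hexp]
        rw [_root_.stdGaussian]
        exact lintegral_pi_prod _ (fun i y => ENNReal.ofReal (Real.exp (θ * d i * y ^ 2)))
          (fun i => by fun_prop)
    _ ≤ ∏ i, ENNReal.ofReal (Real.exp (2 * (θ * d i))) := by
        refine Finset.prod_le_prod' fun i _ => lintegral_exp_sq_le _ (mul_nonneg hθ (hd0 i)) ?_
        exact (mul_le_mul_of_nonneg_left (hd1 i) hθ).trans hlam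
    _ = ENNReal.ofReal (Real.exp (2 * θ * frobSq B)) := by
        rw [← ENNReal.ofReal_prod_of_nonneg (fun i _ => (Real.exp_pos _).le), ← Real.exp_sum, htr,
          Finset.mul_sum]
        simp [mul_assoc]

/-- A matrix with orthonormal rows is a contraction. -/
lemma sqNorm_mulVec_le {μ ι : Type*} [Fintype μ] [DecidableEq μ] [Fintype ι]
    (R : Matrix μ ι ℝ) (hR : R * Rᵀ = 1) (x : ι → ℝ) : sqNorm (R.mulVec x) ≤ sqNorm x := by
  have h := sqNorm_nonneg (x - Rᵀ.mulVec (R.mulVec x))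
  have h1 : x ⬝ᵥ Rᵀ.mulVec (R.mulVec x) = sqNorm (R.mulVec x) := by
    rw [Matrix.dotProduct_mulVec, Matrix.vecMul_transpose, sqNorm_eq_dotProduct]
  have h2 : Rᵀ.mulVec (R.mulVec x) ⬝ᵥ Rᵀ.mulVec (R.mulVec x) = sqNorm (R.mulVec x) := by
    rw [Matrix.dotProduct_mulVec, Matrix.vecMul_transpose, Matrix.mulVec_mulVec, hR,
      Matrix.one_mulVec, sqNorm_eq_dotProduct]
  rw [sqNorm_eq_dotProduct, sub_dotProduct, dotProduct_sub, dotProduct_sub, h2, h1,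
    dotProduct_comm (Rᵀ.mulVec (R.mulVec x)) x, h1, ← sqNorm_eq_dotProduct] at h
  linarith

lemma sum_finProd {n : ℕ} (f : Fin (n * n) → ℝ) :
    ∑ p, f p = ∑ i, ∑ j, f (finProdFinEquiv (i, j)) := by
  rw [← Fintype.sum_prod_type' (f := fun i j => f (finProdFinEquiv (i, j)))]
  exact (Fintype.sum_equiv finProdFinEquiv _ _ (fun _ => rfl)).symm

lemma tensor_apply {n : ℕ} (u v : Fin n → ℝ) (i j : Fin n) :
    tensor u v (finProdFinEquiv (i, j)) = u i * v j := by
  simp only [tensor, _root_.vec, Equiv.symm_apply_apply, Matrix.of_apply]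

lemma sqNorm_tensor {n : ℕ} (u v : Fin n → ℝ) : sqNorm (tensor u v) = sqNorm u * sqNorm v := by
  rw [sqNorm, sum_finProd]
  simp only [tensor_apply, sqNorm, Finset.sum_mul_sum, mul_pow]

/-- The matrix `B_u` with `B_u v = R (u ⊗ v)`. -/
def contr {μ : Type*} {n : ℕ} (R : Matrix μ (Fin (n * n)) ℝ) (u : Fin n → ℝ) :
    Matrix μ (Fin n) ℝ :=
  Matrix.of fun l j => ∑ i, R l (finProdFinEquiv (i, j)) * u i

/-- The matrix `W` with `W u = B_u`, where `B_u = contr R u` is read as a vector. -/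
def unfold {μ : Type*} {n : ℕ} (R : Matrix μ (Fin (n * n)) ℝ) :
    Matrix (μ × Fin n) (Fin n) ℝ :=
  Matrix.of fun p i => R p.1 (finProdFinEquiv (i, p.2))

lemma contr_mulVec {μ : Type*} {n : ℕ} (R : Matrix μ (Fin (n * n)) ℝ) (u v : Fin n → ℝ) :
    (contr R u).mulVec v = R.mulVec (tensor u v) := by
  ext l
  simp only [mulVec, dotProduct, contr, Matrix.of_apply]
  rw [sum_finProd, Finset.sum_comm]
  refine Finset.sum_congr rfl fun j _ => ?_
  rw [Finset.sum_mul]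
  exact Finset.sum_congr rfl fun i _ => by rw [tensor_apply]; ring

lemma frobSq_contr {μ : Type*} [Fintype μ] {n : ℕ} (R : Matrix μ (Fin (n * n)) ℝ)
    (u : Fin n → ℝ) : frobSq (contr R u) = sqNorm ((unfold R).mulVec u) := by
  rw [sqNorm, Fintype.sum_prod_type]
  rfl

lemma sqNorm_unfold_le {μ : Type*} [Fintype μ] [DecidableEq μ] {n : ℕ}
    (R : Matrix μ (Fin (n * n)) ℝ) (hR : R * Rᵀ = 1) (u : Fin n → ℝ) :
    sqNorm ((unfold R).mulVec u) ≤ n * sqNorm u := by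
  have h1 : sqNorm ((unfold R).mulVec u)
      = ∑ j, sqNorm (R.mulVec (tensor u (Pi.single j 1))) := by
    rw [← frobSq_contr, frobSq, Finset.sum_comm]
    refine Finset.sum_congr rfl fun j _ => ?_
    rw [← contr_mulVec, sqNorm]
    simp
  rw [h1]
  calc ∑ j, sqNorm (R.mulVec (tensor u (Pi.single j 1)))
      ≤ ∑ j : Fin n, sqNorm u := by
        refine Finset.sum_le_sum fun j _ => (sqNorm_mulVec_le R hR _).trans ?_
        rw [sqNorm_tensor]
        have : sqNorm (Pi.single j 1 : Fin n → ℝ) = 1 := by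
          rw [sqNorm_eq_dotProduct]; simp
        rw [this, mul_one]
    _ = n * sqNorm u := by simp

lemma frobSq_unfold {μ : Type*} [Fintype μ] [DecidableEq μ] {n : ℕ}
    (R : Matrix μ (Fin (n * n)) ℝ) (hR : R * Rᵀ = 1) :
    frobSq (unfold R) = Fintype.card μ := by
  have h1 : ∀ l, ∑ p, R l p ^ 2 = 1 := by
    intro l
    have := congrFun (congrFun hR l) l
    simpa [Matrix.mul_apply, sq] using this
  rw [frobSq, Fintype.sum_prod_type]
  simp only [unfold, Matrix.of_apply]
  have h2 : ∀ l, ∑ j, ∑ i, R l (finProdFinEquiv (i, j)) ^ 2 = 1 := by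
    intro l
    rw [Finset.sum_comm, ← h1 l, sum_finProd]
  simp [h2]

lemma measurable_tensor {n : ℕ} :
    Measurable fun p : (Fin n → ℝ) × (Fin n → ℝ) => tensor p.1 p.2 := by
  refine measurable_pi_iff.2 fun i => ?_
  simp only [tensor, _root_.vec, Matrix.of_apply]
  fun_prop

/-- Tail bound under the prior: `‖R (u ⊗ v)‖²` has exponential tails at scale `n` above its mean,
the number of rows of `R`, once `‖u‖² ≤ 6 n`.  The Gaussian quadratic form bound is used for `v`
given `u`, and once more for `u`. -/
lemma prior_tail {μ : Type*} [Fintype μ] [DecidableEq μ] {n : ℕ} (hn : 0 < n)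
    (R : Matrix μ (Fin (n * n)) ℝ) (hR : R * Rᵀ = 1) (T : ℝ) :
    ((_root_.stdGaussian (Fin n)).prod (_root_.stdGaussian (Fin n)))
      {p | T < sqNorm (R.mulVec (tensor p.1 p.2)) ∧ sqNorm p.1 ≤ 6 * n}
      ≤ ENNReal.ofReal (Real.exp ((4 * Fintype.card μ - T) / (24 * n))) := by
  have hn' : (0 : ℝ) < n := by exact_mod_cast hn
  set θ : ℝ := 1 / (24 * n) with hθ
  have hθ0 : 0 ≤ θ := by positivity
  have hmF : Measurable fun p : (Fin n → ℝ) × (Fin n → ℝ) =>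
      sqNorm (R.mulVec (tensor p.1 p.2)) :=
    measurable_sqNorm.comp ((measurable_mulVec R).comp measurable_tensor)
  have hmU : Measurable fun p : (Fin n → ℝ) × (Fin n → ℝ) => sqNorm p.1 :=
    measurable_sqNorm.comp measurable_fst
  have hS : MeasurableSet {p : (Fin n → ℝ) × (Fin n → ℝ) |
      T < sqNorm (R.mulVec (tensor p.1 p.2)) ∧ sqNorm p.1 ≤ 6 * n} :=
    (measurableSet_lt measurable_const hmF).inter (measurableSet_le hmU measurable_const)
  rw [Measure.prod_apply hS]
  calc _ ≤ ∫⁻ u, ENNReal.ofReal (Real.exp (-(θ * T))) *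
            ENNReal.ofReal (Real.exp (2 * θ * sqNorm ((unfold R).mulVec u)))
            ∂(_root_.stdGaussian (Fin n)) := by
        refine lintegral_mono fun u => ?_
        by_cases hu : sqNorm u ≤ 6 * n
        · have h1 : (_root_.stdGaussian (Fin n)) (Prod.mk u ⁻¹'
              {p | T < sqNorm (R.mulVec (tensor p.1 p.2)) ∧ sqNorm p.1 ≤ 6 * n})
              ≤ ∫⁻ v, ENNReal.ofReal (Real.exp (-(θ * T))) *
                ENNReal.ofReal (Real.exp (θ * sqNorm ((contr R u).mulVec v)))
                ∂(_root_.stdGaussian (Fin n)) := by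
            rw [← lintegral_indicator_one (measurable_prodMk_left hS)]
            refine lintegral_mono (Set.indicator_le fun v hv => ?_)
            rw [Set.mem_preimage, Set.mem_ofPred_eq] at hv
            rw [← ENNReal.ofReal_mul (Real.exp_pos _).le, ← Real.exp_add, contr_mulVec,
              Pi.one_apply, ENNReal.one_le_ofReal]
            apply Real.one_le_exp
            have := mul_le_mul_of_nonneg_left hv.1.le hθ0
            linarith
          refine h1.trans ?_
          rw [lintegral_const_mul _ (by
            exact ENNReal.measurable_ofReal.comp (Real.measurable_exp.comp
              ((measurable_sqNorm.comp (measurable_mulVec _)).const_mul _))), ← frobSq_contr]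
          gcongr
          refine lintegral_exp_sqNorm_mulVec_le _ (6 * n) θ hθ0 (fun v => ?_) ?_
          · rw [contr_mulVec]
            refine (sqNorm_mulVec_le R hR _).trans ?_
            rw [sqNorm_tensor]
            exact mul_le_mul_of_nonneg_right hu (sqNorm_nonneg _)
          · rw [hθ]; field_simp; norm_num
        · have : Prod.mk u ⁻¹'
              {p | T < sqNorm (R.mulVec (tensor p.1 p.2)) ∧ sqNorm p.1 ≤ 6 * n} = ∅ := by
            ext v; simp [hu]
          rw [this]; simp
    _ ≤ ENNReal.ofReal (Real.exp (-(θ * T))) *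
          ENNReal.ofReal (Real.exp (2 * (2 * θ) * frobSq (unfold R))) := by
        rw [lintegral_const_mul _ (by
            exact ENNReal.measurable_ofReal.comp (Real.measurable_exp.comp
              ((measurable_sqNorm.comp (measurable_mulVec _)).const_mul _)))]
        gcongr
        refine lintegral_exp_sqNorm_mulVec_le _ n (2 * θ) (by positivity)
          (fun u => sqNorm_unfold_le R hR u) ?_
        rw [hθ]; field_simp; norm_num
    _ = _ := by
        rw [← ENNReal.ofReal_mul (Real.exp_pos _).le, ← Real.exp_add, frobSq_unfold R hR]
        congr 2
        rw [hθ]; field_simp; ring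

lemma sqNorm_tail {n : ℕ} (hn : 0 < n) :
    (_root_.stdGaussian (Fin n)) {u | 6 * (n : ℝ) < sqNorm u} ≤ ENNReal.ofReal ((n : ℝ)⁻¹) := by
  have hn' : (0 : ℝ) < n := by exact_mod_cast hn
  have hS : MeasurableSet {u : Fin n → ℝ | 6 * (n : ℝ) < sqNorm u} :=
    measurableSet_lt measurable_const measurable_sqNorm
  have h0 := lintegral_exp_sqNorm_mulVec_le (1 : Matrix (Fin n) (Fin n) ℝ) 1 (1 / 4) (by norm_num)
    (fun x => by simp) (by norm_num)
  have hf : frobSq (1 : Matrix (Fin n) (Fin n) ℝ) = n := by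
    simp [frobSq, Matrix.one_apply]
  rw [hf] at h0
  simp only [Matrix.one_mulVec] at h0
  calc _ ≤ ∫⁻ u, ENNReal.ofReal (Real.exp (-(3 * n / 2))) *
        ENNReal.ofReal (Real.exp (1 / 4 * sqNorm u)) ∂(_root_.stdGaussian (Fin n)) := by
        rw [← lintegral_indicator_one hS]
        refine lintegral_mono (Set.indicator_le fun v hv => ?_)
        rw [Set.mem_ofPred_eq] at hv
        rw [← ENNReal.ofReal_mul (Real.exp_pos _).le, ← Real.exp_add,
              Pi.one_apply, ENNReal.one_le_ofReal]
        apply Real.one_le_exp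
        linarith
    _ ≤ ENNReal.ofReal (Real.exp (-(3 * n / 2))) * ENNReal.ofReal (Real.exp (2 * (1 / 4) * n)) := by
        rw [lintegral_const_mul _ (by
            exact ENNReal.measurable_ofReal.comp (Real.measurable_exp.comp
              (measurable_sqNorm.const_mul _)))]
        gcongr
    _ = ENNReal.ofReal (Real.exp (-n)) := by
        rw [← ENNReal.ofReal_mul (Real.exp_pos _).le, ← Real.exp_add]
        congr 2; ring
    _ ≤ _ := by
        apply ENNReal.ofReal_le_ofReal
        rw [Real.exp_neg]
        apply inv_anti₀ hn'
        linarith [Real.add_one_le_exp (n : ℝ)]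

/-! ### Law of the history of an adaptive run -/

lemma measurable_mulVec_of_entries {α ι κ : Type*} [MeasurableSpace α] [Fintype κ]
    {M : α → Matrix ι κ ℝ} {v : α → κ → ℝ} (hM : ∀ i j, Measurable fun a => M a i j)
    (hv : Measurable v) : Measurable fun a => (M a).mulVec (v a) := by
  refine measurable_pi_iff.2 fun i => ?_
  simp only [mulVec, dotProduct]
  exact Finset.measurable_sum _ fun j _ => (hM i j).mul ((measurable_pi_apply j).comp hv)

lemma measurable_dotProduct_of {α κ : Type*} [MeasurableSpace α] [Fintype κ]
    {v w : α → κ → ℝ} (hv : Measurable v) (hw : Measurable w) :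
    Measurable fun a => v a ⬝ᵥ w a := by
  simp only [dotProduct]
  exact Finset.measurable_sum _ fun j _ =>
    ((measurable_pi_apply j).comp hv).mul ((measurable_pi_apply j).comp hw)

/-- Law of a `j`-round history of independent standard Gaussian responses. -/
def histMeas (k j : ℕ) : Measure (Fin j → Fin k → ℝ) :=
  Measure.pi fun _ => _root_.stdGaussian (Fin k)

instance isProbabilityMeasure_histMeas (k j : ℕ) : IsProbabilityMeasure (histMeas k j) := by
  unfold histMeas; infer_instance

/-- Appending one more response to a history. -/
abbrev app {k j : ℕ} (h : Fin j → Fin k → ℝ) (w : Fin k → ℝ) : Fin (j + 1) → Fin k → ℝ :=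
  Fin.snoc (α := fun _ => Fin k → ℝ) h w

lemma measurable_app {k j : ℕ} :
    Measurable fun p : (Fin j → Fin k → ℝ) × (Fin k → ℝ) => app p.1 p.2 := by
  refine measurable_pi_iff.2 fun i => ?_
  refine Fin.lastCases ?_ (fun i => ?_) i
  · simpa [app] using measurable_snd
  · simp only [app, Fin.snoc_castSucc]
    exact (measurable_pi_apply i).comp measurable_fst

lemma lintegral_histMeas_succ {k j : ℕ} (G : (Fin (j + 1) → Fin k → ℝ) → ℝ≥0∞)
    (hG : Measurable G) :
    ∫⁻ h, G h ∂(histMeas k (j + 1))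
      = ∫⁻ h, ∫⁻ w, G (app h w) ∂(_root_.stdGaussian (Fin k)) ∂(histMeas k j) := by
  have hmp := (measurePreserving_piFinSuccAbove
    (fun _ : Fin (j + 1) => _root_.stdGaussian (Fin k)) (Fin.last j)).symm
  have e := hmp.lintegral_comp hG
  refine e.symm.trans ?_
  refine (lintegral_prod_symm _ (hG.comp (MeasurableEquiv.measurable _)).aemeasurable).trans ?_
  refine lintegral_congr fun h => lintegral_congr fun w => ?_
  change G _ = G _
  congr 1
  simp [MeasurableEquiv.piFinSuccAbove, app]
  rfl

namespace QueryMaps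

variable {N k t : ℕ} (Q : QueryMaps N k t)

/-- The query matrix of round `i < j` after the history `h` of length `j`. -/
def qAt {j : ℕ} (hj : j ≤ t) (h : Fin j → Fin k → ℝ) (i : Fin j) : Matrix (Fin k) (Fin N) ℝ :=
  Q ⟨i, i.2.trans_le hj⟩ fun l => h ⟨l, l.2.trans i.2⟩

/-- The responses of the first `j` rounds on input `a`. -/
def hist (a : Fin N → ℝ) {j : ℕ} (hj : j ≤ t) : Fin j → Fin k → ℝ :=
  fun i => resp Q a ⟨i, i.2.trans_le hj⟩

/-- The stacked query matrices of the first `j` rounds. -/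
def stack {j : ℕ} (hj : j ≤ t) (h : Fin j → Fin k → ℝ) : Matrix (Fin j × Fin k) (Fin N) ℝ :=
  Matrix.of fun p l => Q.qAt hj h p.1 p.2 l

/-- The affine map replacing the component of `z` in the row span of the first `j` query matrices by
the one prescribed by the responses `h`. -/
def recon {j : ℕ} (hj : j ≤ t) (h : Fin j → Fin k → ℝ) (z : Fin N → ℝ) : Fin N → ℝ :=
  z + ∑ i, (Q.qAt hj h i)ᵀ.mulVec (h i - (Q.qAt hj h i).mulVec z)

/-- The information `∑ ‖Q⁽ⁱ⁾ x‖²` about `x` in the first `j` rounds; for valid query maps, the squared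
norm of the projection of `x` to the span of their rows. -/
def info {j : ℕ} (hj : j ≤ t) (h : Fin j → Fin k → ℝ) (x : Fin N → ℝ) : ℝ :=
  ∑ i, sqNorm ((Q.qAt hj h i).mulVec x)

/-- Likelihood ratio of the history `h` between the input `y + s • x` and the input `y`, for a
standard Gaussian `y`. -/
def lik (s : ℝ) {j : ℕ} (hj : j ≤ t) (h : Fin j → Fin k → ℝ) (x : Fin N → ℝ) : ℝ≥0∞ :=
  ENNReal.ofReal (Real.exp
    (s * ∑ i, (Q.qAt hj h i).mulVec x ⬝ᵥ h i - s ^ 2 / 2 * Q.info hj h x))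

lemma sqNorm_stack_mulVec {j : ℕ} (hj : j ≤ t) (h : Fin j → Fin k → ℝ) (x : Fin N → ℝ) :
    sqNorm ((Q.stack hj h).mulVec x) = Q.info hj h x := by
  rw [sqNorm, Fintype.sum_prod_type]
  rfl

lemma sqNorm_runMat_mulVec (a x : Fin N → ℝ) :
    sqNorm ((Q.runMat a).mulVec x) = Q.info le_rfl (Q.hist a le_rfl) x := by
  rw [← sqNorm_stack_mulVec]
  rfl

lemma qAt_app_castSucc {j : ℕ} (hj : j + 1 ≤ t) (h : Fin j → Fin k → ℝ) (w : Fin k → ℝ)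
    (i : Fin j) :
    Q.qAt hj (app h w) i.castSucc = Q.qAt ((Nat.le_succ j).trans hj) h i := by
  unfold qAt
  congr 1
  ext l
  have : (⟨l.1, l.2.trans i.castSucc.2⟩ : Fin (j + 1))
      = Fin.castSucc (⟨l.1, l.2.trans i.2⟩ : Fin j) := rfl
  rw [this, app, Fin.snoc_castSucc]

lemma qAt_app_last {j : ℕ} (hj : j + 1 ≤ t) (h : Fin j → Fin k → ℝ) (w : Fin k → ℝ) :
    Q.qAt hj (app h w) (Fin.last j) = Q ⟨j, hj⟩ h := by
  unfold qAt
  congr 1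
  ext l
  have : (⟨l.1, l.2.trans (Fin.last j).2⟩ : Fin (j + 1))
      = Fin.castSucc (⟨l.1, l.2⟩ : Fin j) := rfl
  rw [this, app, Fin.snoc_castSucc]
  rfl

lemma hist_succ (a : Fin N → ℝ) {j : ℕ} (hj : j + 1 ≤ t) :
    Q.hist a hj = app (Q.hist a ((Nat.le_succ j).trans hj))
      ((Q ⟨j, hj⟩ (Q.hist a ((Nat.le_succ j).trans hj))).mulVec a) := by
  funext i
  refine Fin.lastCases ?_ (fun i => ?_) i
  · rw [app, Fin.snoc_last, hist, resp]
    rfl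
  · rw [app, Fin.snoc_castSucc]
    rfl

lemma info_app {j : ℕ} (hj : j + 1 ≤ t) (h : Fin j → Fin k → ℝ) (w : Fin k → ℝ)
    (x : Fin N → ℝ) :
    Q.info hj (app h w) x
      = Q.info ((Nat.le_succ j).trans hj) h x + sqNorm ((Q ⟨j, hj⟩ h).mulVec x) := by
  rw [info, Fin.sum_univ_castSucc, qAt_app_last]
  simp only [qAt_app_castSucc]
  rfl

lemma lik_app (s : ℝ) {j : ℕ} (hj : j + 1 ≤ t) (h : Fin j → Fin k → ℝ) (w : Fin k → ℝ)
    (x : Fin N → ℝ) :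
    Q.lik s hj (app h w) x = Q.lik s ((Nat.le_succ j).trans hj) h x *
      ENNReal.ofReal (Real.exp ((s • (Q ⟨j, hj⟩ h).mulVec x) ⬝ᵥ w
        - sqNorm (s • (Q ⟨j, hj⟩ h).mulVec x) / 2)) := by
  rw [lik, lik, ← ENNReal.ofReal_mul (Real.exp_pos _).le, ← Real.exp_add, info_app,
    Fin.sum_univ_castSucc, qAt_app_last]
  simp only [qAt_app_castSucc, app, Fin.snoc_castSucc, Fin.snoc_last]
  have : sqNorm (s • (Q ⟨j, hj⟩ h).mulVec x) = s ^ 2 * sqNorm ((Q ⟨j, hj⟩ h).mulVec x) := by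
    simp [sqNorm, mul_pow, Finset.mul_sum]
  rw [this, smul_dotProduct, smul_eq_mul]
  congr 2
  ring

lemma recon_app {j : ℕ} (hj : j + 1 ≤ t) (h : Fin j → Fin k → ℝ) (w : Fin k → ℝ)
    (z : Fin N → ℝ) :
    Q.recon hj (app h w) z = Q.recon ((Nat.le_succ j).trans hj) h z
      + (Q ⟨j, hj⟩ h)ᵀ.mulVec (w - (Q ⟨j, hj⟩ h).mulVec z) := by
  rw [recon, recon, Fin.sum_univ_castSucc, qAt_app_last]
  simp only [qAt_app_castSucc, app, Fin.snoc_castSucc, Fin.snoc_last]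
  abel

variable {Q}

lemma Valid.last_mul_qAt (hQ : Q.Valid) {j : ℕ} (hj : j + 1 ≤ t) (h : Fin j → Fin k → ℝ)
    (i : Fin j) : Q ⟨j, hj⟩ h * (Q.qAt ((Nat.le_succ j).trans hj) h i)ᵀ = 0 :=
  hQ.2.2 ⟨j, hj⟩ ⟨i, i.2.trans hj⟩ i.2 h

lemma Valid.qAt_mul_last (hQ : Q.Valid) {j : ℕ} (hj : j + 1 ≤ t) (h : Fin j → Fin k → ℝ)
    (i : Fin j) : Q.qAt ((Nat.le_succ j).trans hj) h i * (Q ⟨j, hj⟩ h)ᵀ = 0 := by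
  have := congrArg Matrix.transpose (hQ.last_mul_qAt hj h i)
  simpa using this

lemma Valid.qAt_mul_of_lt (hQ : Q.Valid) {j : ℕ} (hj : j ≤ t) (h : Fin j → Fin k → ℝ)
    (i i' : Fin j) (hi : i < i') : Q.qAt hj h i' * (Q.qAt hj h i)ᵀ = 0 :=
  hQ.2.2 ⟨i', i'.2.trans_le hj⟩ ⟨i, i.2.trans_le hj⟩ hi (fun l => h ⟨l, l.2.trans i'.2⟩)

lemma Valid.stack_orthonormal (hQ : Q.Valid) {j : ℕ} (hj : j ≤ t) (h : Fin j → Fin k → ℝ) :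
    Q.stack hj h * (Q.stack hj h)ᵀ = 1 := by
  ext ⟨i, a⟩ ⟨i', b⟩
  have e : (Q.stack hj h * (Q.stack hj h)ᵀ) (i, a) (i', b)
      = (Q.qAt hj h i * (Q.qAt hj h i')ᵀ) a b := rfl
  rw [e]
  rcases lt_trichotomy i i' with hlt | rfl | hlt
  · have h1 := congrArg Matrix.transpose (hQ.qAt_mul_of_lt hj h i i' hlt)
    rw [Matrix.transpose_mul, Matrix.transpose_transpose, Matrix.transpose_zero] at h1
    rw [h1, Matrix.one_apply_ne (by simp [hlt.ne])]
    rfl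
  · have h1 : Q.qAt hj h i * (Q.qAt hj h i)ᵀ = 1 := hQ.2.1 _ _
    rw [h1]
    by_cases hab : a = b
    · subst hab
      rw [Matrix.one_apply_eq, Matrix.one_apply_eq]
    · rw [Matrix.one_apply_ne hab, Matrix.one_apply_ne (by simp [hab])]
  · rw [hQ.qAt_mul_of_lt hj h i' i hlt, Matrix.one_apply_ne (by simp [hlt.ne'])]
    rfl

lemma Valid.last_mulVec_recon (hQ : Q.Valid) {j : ℕ} (hj : j + 1 ≤ t) (h : Fin j → Fin k → ℝ)
    (z : Fin N → ℝ) :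
    (Q ⟨j, hj⟩ h).mulVec (Q.recon ((Nat.le_succ j).trans hj) h z) = (Q ⟨j, hj⟩ h).mulVec z := by
  rw [recon, Matrix.mulVec_add, Matrix.mulVec_sum]
  simp [Matrix.mulVec_mulVec, hQ.last_mul_qAt hj h]

lemma Valid.recon_add (hQ : Q.Valid) {j : ℕ} (hj : j + 1 ≤ t) (h : Fin j → Fin k → ℝ)
    (z : Fin N → ℝ) (v : Fin k → ℝ) :
    Q.recon ((Nat.le_succ j).trans hj) h (z + (Q ⟨j, hj⟩ h)ᵀ.mulVec v)
      = Q.recon ((Nat.le_succ j).trans hj) h z + (Q ⟨j, hj⟩ h)ᵀ.mulVec v := by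
  simp only [recon, Matrix.mulVec_add, Matrix.mulVec_mulVec, hQ.qAt_mul_last hj h,
    Matrix.zero_mulVec, add_zero]
  abel

lemma Valid.measurable_last (hQ : Q.Valid) {j : ℕ} (hj : j < t) (a : Fin k) (l : Fin N) :
    Measurable fun h => Q ⟨j, hj⟩ h a l := hQ.1 ⟨j, hj⟩ a l

lemma Valid.measurable_qAt (hQ : Q.Valid) {j : ℕ} (hj : j ≤ t) (i : Fin j) (a : Fin k)
    (l : Fin N) : Measurable fun h : Fin j → Fin k → ℝ => Q.qAt hj h i a l := by
  unfold qAt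
  exact (hQ.1 ⟨i, i.2.trans_le hj⟩ a l).comp
    (measurable_pi_iff.2 fun l => measurable_pi_apply _)

lemma Valid.measurable_info (hQ : Q.Valid) {j : ℕ} (hj : j ≤ t) :
    Measurable fun p : (Fin j → Fin k → ℝ) × (Fin N → ℝ) => Q.info hj p.1 p.2 := by
  unfold info
  exact Finset.measurable_sum _ fun i _ => measurable_sqNorm.comp (measurable_mulVec_of_entries
    (fun a l => (hQ.measurable_qAt hj i a l).comp measurable_fst) measurable_snd)

lemma Valid.measurable_lik (hQ : Q.Valid) (s : ℝ) {j : ℕ} (hj : j ≤ t) :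
    Measurable fun p : (Fin j → Fin k → ℝ) × (Fin N → ℝ) => Q.lik s hj p.1 p.2 := by
  unfold lik
  refine ENNReal.measurable_ofReal.comp (Real.measurable_exp.comp (Measurable.sub
    (Measurable.const_mul (Finset.measurable_sum _ fun i _ => measurable_dotProduct_of
      (measurable_mulVec_of_entries
        (fun a l => (hQ.measurable_qAt hj i a l).comp measurable_fst) measurable_snd)
      ((measurable_pi_apply i).comp measurable_fst)) _)
    ((hQ.measurable_info hj).const_mul _)))

lemma Valid.measurable_recon (hQ : Q.Valid) {j : ℕ} (hj : j ≤ t) :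
    Measurable fun p : (Fin j → Fin k → ℝ) × (Fin N → ℝ) => Q.recon hj p.1 p.2 := by
  unfold recon
  refine measurable_snd.add (Finset.measurable_sum _ fun i _ => measurable_mulVec_of_entries
    (fun a l => ?_) (Measurable.sub ((measurable_pi_apply i).comp measurable_fst)
      (measurable_mulVec_of_entries
        (fun a l => (hQ.measurable_qAt hj i a l).comp measurable_fst) measurable_snd)))
  exact (hQ.measurable_qAt hj i l a).comp measurable_fst

lemma Valid.measurable_hist (hQ : Q.Valid) {j : ℕ} (hj : j ≤ t) :
    Measurable fun a : Fin N → ℝ => Q.hist a hj := by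
  induction j with
  | zero => exact measurable_pi_iff.2 fun i => i.elim0
  | succ j ih =>
    have ih' := ih ((Nat.le_succ j).trans hj)
    simp_rw [hist_succ]
    exact measurable_app.comp (ih'.prodMk (measurable_mulVec_of_entries
      (fun a l => (hQ.measurable_last hj a l).comp ih') measurable_id))

/-- Joint law of the history and the input `y + s • x`, `y` standard Gaussian: the history has
density `lik` with respect to independent standard Gaussian responses, and given the history the
input is a fresh planted Gaussian whose queried components are overwritten. In the inductive step
the Gaussian is split along the new query, and the response is recentred by Cameron–Martin. -/
lemma Valid.lintegral_hist (hQ : Q.Valid) (s : ℝ) (x : Fin N → ℝ) {j : ℕ} (hj : j ≤ t)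
    (f : (Fin j → Fin k → ℝ) × (Fin N → ℝ) → ℝ≥0∞) (hf : Measurable f) :
    ∫⁻ y, f (Q.hist (y + s • x) hj, y + s • x) ∂(_root_.stdGaussian (Fin N))
      = ∫⁻ h, ∫⁻ y, f (h, Q.recon hj h (y + s • x)) * Q.lik s hj h x
          ∂(_root_.stdGaussian (Fin N)) ∂(histMeas k j) := by
  induction j with
  | zero =>
    have h0 : ∀ h : Fin 0 → Fin k → ℝ, ∫⁻ y, f (h, Q.recon hj h (y + s • x)) * Q.lik s hj h x
          ∂(_root_.stdGaussian (Fin N))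
        = ∫⁻ y, f (Q.hist (y + s • x) hj, y + s • x) ∂(_root_.stdGaussian (Fin N)) := by
      intro h
      refine lintegral_congr fun y => ?_
      rw [Subsingleton.elim (Q.hist (y + s • x) hj) h]
      simp [recon, lik, info]
    simp_rw [h0]
    simp
  | succ j ih =>
    have hj' := (Nat.le_succ j).trans hj
    have hmA : Measurable fun p : (Fin j → Fin k → ℝ) × (Fin N → ℝ) =>
        (app p.1 ((Q ⟨j, hj⟩ p.1).mulVec p.2), p.2) :=
      (measurable_app.comp (measurable_fst.prodMk (measurable_mulVec_of_entries
        (fun a l => (hQ.measurable_last hj a l).comp measurable_fst) measurable_snd))).prodMk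
        measurable_snd
    have e := ih hj' (fun p => f (app p.1 ((Q ⟨j, hj⟩ p.1).mulVec p.2), p.2)) (hf.comp hmA)
    simp_rw [hist_succ]
    refine e.trans ?_
    have hmG : Measurable fun q : (Fin (j + 1) → Fin k → ℝ) × (Fin N → ℝ) =>
        f (q.1, Q.recon hj q.1 (q.2 + s • x)) * Q.lik s hj q.1 x := by
      have hp1 : Measurable fun q : (Fin (j + 1) → Fin k → ℝ) × (Fin N → ℝ) =>
          (q.1, q.2 + s • x) := measurable_fst.prodMk (measurable_snd.add_const _)
      have hp2 : Measurable fun q : (Fin (j + 1) → Fin k → ℝ) × (Fin N → ℝ) => (q.1, x) :=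
        measurable_fst.prodMk measurable_const
      have hr := (hQ.measurable_recon hj).comp hp1
      have hl := (hQ.measurable_lik s hj).comp hp2
      exact (hf.comp (measurable_fst.prodMk hr)).mul hl
    rw [lintegral_histMeas_succ _ hmG.lintegral_prod_right']
    refine lintegral_congr fun h => ?_
    set A := Q ⟨j, hj⟩ h with hA
    have hmF : Measurable fun y : Fin N → ℝ =>
        f (app h (A.mulVec (Q.recon hj' h (y + s • x))), Q.recon hj' h (y + s • x))
          * Q.lik s hj' h x := by
      refine Measurable.mul_const ?_ _
      exact (hf.comp hmA).comp (measurable_const.prodMk ((hQ.measurable_recon hj').comp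
        (measurable_const.prodMk (measurable_id.add_const _))))
    rw [lintegral_stdG_split A (hQ.2.1 _ _) _ hmF]
    have hmW : Measurable fun q : (Fin N → ℝ) × (Fin k → ℝ) =>
        f (app h q.2, Q.recon hj (app h q.2) (q.1 + s • x)) * Q.lik s hj (app h q.2) x :=
      hmG.comp ((measurable_app.comp (measurable_const.prodMk measurable_snd)).prodMk
        measurable_fst)
    rw [lintegral_lintegral_swap (f := fun w y =>
        f (app h w, Q.recon hj (app h w) (y + s • x)) * Q.lik s hj (app h w) x)
      (hmW.comp measurable_swap).aemeasurable]
    refine lintegral_congr fun y => ?_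
    have hstep : ∀ g : Fin k → ℝ,
        f (app h (A.mulVec (Q.recon hj' h (y + Aᵀ.mulVec (g - A.mulVec y) + s • x))),
            Q.recon hj' h (y + Aᵀ.mulVec (g - A.mulVec y) + s • x)) * Q.lik s hj' h x
        = (fun w => f (app h w, Q.recon hj (app h w) (y + s • x)) * Q.lik s hj' h x)
            (g + s • A.mulVec x) := by
      intro g
      have e1 : y + Aᵀ.mulVec (g - A.mulVec y) + s • x
          = (y + s • x) + Aᵀ.mulVec (g - A.mulVec y) := by abel
      have e2 : A.mulVec (Q.recon hj' h (y + Aᵀ.mulVec (g - A.mulVec y) + s • x))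
          = g + s • A.mulVec x := by
        rw [hA, hQ.last_mulVec_recon hj h, ← hA, e1, Matrix.mulVec_add, Matrix.mulVec_mulVec,
          hQ.2.1, Matrix.one_mulVec, Matrix.mulVec_add, Matrix.mulVec_smul]
        abel
      have e3 : Q.recon hj' h (y + Aᵀ.mulVec (g - A.mulVec y) + s • x)
          = Q.recon hj (app h (g + s • A.mulVec x)) (y + s • x) := by
        rw [e1, hA, hQ.recon_add hj h, recon_app, ← hA]
        congr 2
        rw [Matrix.mulVec_add, Matrix.mulVec_smul]
        abel
      simp only
      rw [e2, e3]
    simp_rw [hstep]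
    rw [lintegral_stdG_shift (s • A.mulVec x)
      (fun w => f (app h w, Q.recon hj (app h w) (y + s • x)) * Q.lik s hj' h x)]
    · refine lintegral_congr fun w => ?_
      rw [lik_app, mul_assoc]
    · refine Measurable.mul_const ?_ _
      exact hf.comp ((measurable_app.comp (measurable_const.prodMk measurable_id)).prodMk
        ((hQ.measurable_recon hj).comp
          ((measurable_app.comp (measurable_const.prodMk measurable_id)).prodMk measurable_const)))

end QueryMaps

/-! ### One round of the algorithm -/

/-- Truncated change of measure. Let `l` be a likelihood ratio with respect to `η` for every
parameter `x`, with mixture `P h = ∫ l (h, x) dμ(x)`, and suppose that on `S` the second moment is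
controlled by `exp a` times another likelihood ratio `l₂`. On `S` one has
`l ≤ exp (a + 2b) P + 1{P ≤ exp (-b)} l + exp (-b) l₂`: if both `P > exp (-b)` and
`l > exp (a + 2b) P`, then `l > exp (a + b)`, whence `exp (a + b) l ≤ l² ≤ exp a l₂`. The three
terms integrate to at most `exp (a + 2b) δ`, `exp (-b)` and `exp (-b)`. -/
lemma truncated_likelihood {H X : Type*} [MeasurableSpace H] [MeasurableSpace X]
    (η : Measure H) [IsProbabilityMeasure η] (μ : Measure X) [IsProbabilityMeasure μ]
    (l l₂ : H × X → ℝ≥0∞) (hl : Measurable l) (hl₂ : Measurable l₂)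
    (S : Set (H × X)) (hS : MeasurableSet S) (a b : ℝ) (δ : ℝ≥0∞)
    (h1 : ∀ x, ∫⁻ h, l (h, x) ∂η ≤ 1) (h2 : ∀ x, ∫⁻ h, l₂ (h, x) ∂η ≤ 1)
    (h12 : ∀ p ∈ S, l p * l p ≤ ENNReal.ofReal (Real.exp a) * l₂ p)
    (hδ : ∀ h, μ {x | (h, x) ∈ S} ≤ δ) :
    ∫⁻ p, S.indicator l p ∂(η.prod μ)
      ≤ ENNReal.ofReal (Real.exp (a + 2 * b)) * δ + 2 * ENNReal.ofReal (Real.exp (-b)) := by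
  set E : ℝ≥0∞ := ENNReal.ofReal (Real.exp (a + 2 * b)) with hE
  set ε : ℝ≥0∞ := ENNReal.ofReal (Real.exp (-b)) with hε
  set P : H → ℝ≥0∞ := fun h => ∫⁻ x, l (h, x) ∂μ with hP
  have hPm : Measurable P := hl.lintegral_prod_right'
  have hPint : ∫⁻ h, P h ∂η ≤ 1 := by
    rw [hP, lintegral_lintegral_swap (f := fun h x => l (h, x)) hl.aemeasurable]
    calc ∫⁻ x, ∫⁻ h, l (h, x) ∂η ∂μ ≤ ∫⁻ _, 1 ∂μ := lintegral_mono h1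
      _ = 1 := by simp
  have hL : MeasurableSet {h | P h ≤ ε} := measurableSet_le hPm measurable_const
  have hpt : ∀ p : H × X, S.indicator l p ≤ S.indicator (fun p => E * P p.1) p
      + ({h | P h ≤ ε}.indicator 1 p.1 * l p) + ε * l₂ p := by
    intro p
    by_cases hp : p ∈ S
    · rw [Set.indicator_of_mem hp, Set.indicator_of_mem hp]
      by_cases hlow : P p.1 ≤ ε
      · rw [Set.indicator_of_mem (show p.1 ∈ {h | P h ≤ ε} from hlow)]
        rw [Pi.one_apply, one_mul, add_right_comm]
        exact le_add_self
      · by_cases hle : l p ≤ E * P p.1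
        · rw [add_assoc]
          exact hle.trans le_self_add
        · have hbig : ENNReal.ofReal (Real.exp (a + b)) ≤ l p := by
            have : ENNReal.ofReal (Real.exp (a + b)) = E * ε := by
              rw [hE, hε, ← ENNReal.ofReal_mul (Real.exp_pos _).le, ← Real.exp_add]
              congr 2; ring
            rw [this]
            exact (mul_le_mul_right (not_le.1 hlow).le _).trans (not_le.1 hle).le
          have hmul : ENNReal.ofReal (Real.exp (a + b)) * l p
              ≤ ENNReal.ofReal (Real.exp a) * l₂ p :=
            (mul_le_mul_left hbig _).trans (h12 p hp)
          have hfin : l p ≤ ε * l₂ p := by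
            have e1 : ENNReal.ofReal (Real.exp (-(a + b))) * ENNReal.ofReal (Real.exp (a + b))
                = 1 := by
              rw [← ENNReal.ofReal_mul (Real.exp_pos _).le, ← Real.exp_add]; simp
            have e2 : ENNReal.ofReal (Real.exp (-(a + b))) * ENNReal.ofReal (Real.exp a) = ε := by
              rw [hε, ← ENNReal.ofReal_mul (Real.exp_pos _).le, ← Real.exp_add]
              congr 2; ring
            have := mul_le_mul_right hmul (ENNReal.ofReal (Real.exp (-(a + b))))
            rwa [← mul_assoc, ← mul_assoc, e1, e2, one_mul] at this
          exact hfin.trans le_add_self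
    · rw [Set.indicator_of_notMem hp]
      exact zero_le
  have m1 : Measurable (S.indicator fun p : H × X => E * P p.1) :=
    ((hPm.comp measurable_fst).const_mul E).indicator hS
  have m2 : Measurable fun p : H × X => ({h | P h ≤ ε}.indicator 1 p.1 * l p : ℝ≥0∞) :=
    ((measurable_one.indicator hL).comp measurable_fst).mul hl
  have i1 : ∫⁻ p, S.indicator (fun p => E * P p.1) p ∂(η.prod μ) ≤ E * δ := by
    rw [lintegral_prod _ m1.aemeasurable]
    calc ∫⁻ h, ∫⁻ x, S.indicator (fun p => E * P p.1) (h, x) ∂μ ∂η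
        ≤ ∫⁻ h, E * δ * P h ∂η := by
          refine lintegral_mono fun h => ?_
          have e : ∀ x, S.indicator (fun p => E * P p.1) (h, x)
              = {x | (h, x) ∈ S}.indicator (fun _ => E * P h) x := fun x => rfl
          simp_rw [e]
          have hSh : MeasurableSet {x | (h, x) ∈ S} := measurable_prodMk_left hS
          rw [lintegral_indicator_const hSh, mul_right_comm]
          exact mul_le_mul_left (mul_le_mul_right (hδ h) _) _
      _ = E * δ * ∫⁻ h, P h ∂η := lintegral_const_mul _ hPm
      _ ≤ E * δ := by
          calc E * δ * ∫⁻ h, P h ∂η ≤ E * δ * 1 := mul_le_mul_right hPint _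
            _ = E * δ := mul_one _
  have i2 : ∫⁻ p, ({h | P h ≤ ε}.indicator 1 p.1 * l p : ℝ≥0∞) ∂(η.prod μ) ≤ ε := by
    rw [lintegral_prod _ m2.aemeasurable]
    calc _ ≤ ∫⁻ _, ε ∂η := by
          refine lintegral_mono fun h => ?_
          simp only
          have hlh : Measurable fun x => l (h, x) := hl.comp measurable_prodMk_left
          rw [lintegral_const_mul _ hlh]
          by_cases hlow : P h ≤ ε
          · rw [Set.indicator_of_mem (show h ∈ {h | P h ≤ ε} from hlow), Pi.one_apply, one_mul]
            exact hlow
          · rw [Set.indicator_of_notMem (show h ∉ {h | P h ≤ ε} from hlow), zero_mul]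
            exact zero_le
      _ = ε := by simp
  have i3 : ∫⁻ p, ε * l₂ p ∂(η.prod μ) ≤ ε := by
    rw [lintegral_const_mul _ hl₂, lintegral_prod_symm _ hl₂.aemeasurable]
    calc ε * ∫⁻ x, ∫⁻ h, l₂ (h, x) ∂η ∂μ ≤ ε * ∫⁻ _, 1 ∂μ :=
          mul_le_mul_right (lintegral_mono h2) _
      _ = ε := by simp
  calc ∫⁻ p, S.indicator l p ∂(η.prod μ) ≤ _ := lintegral_mono hpt
    _ = _ := lintegral_add_right _ (hl₂.const_mul ε)
    _ ≤ (E * δ + ε) + ε := by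
      refine add_le_add ?_ i3
      rw [lintegral_add_right _ m2]
      exact add_le_add i1 i2
    _ = E * δ + 2 * ε := by rw [add_assoc, two_mul]

lemma measurable_vec_of {n : ℕ} :
    Measurable (fun A : Fin n → Fin n → ℝ => vec n (Matrix.of A)) := by
  refine measurable_pi_iff.2 fun i => ?_
  simp only [_root_.vec, Matrix.of_apply]
  fun_prop

namespace QueryMaps

variable {N k t : ℕ} {Q : QueryMaps N k t}

/-- The square of the likelihood ratio is the likelihood ratio for the doubled plant, up to the
exponential of the information: this bounds the second moment where the information is small. -/
lemma lik_mul_self (s : ℝ) {j : ℕ} (hj : j ≤ t) (h : Fin j → Fin k → ℝ) (x : Fin N → ℝ) :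
    Q.lik s hj h x * Q.lik s hj h x
      = ENNReal.ofReal (Real.exp (s ^ 2 * Q.info hj h x)) * Q.lik (2 * s) hj h x := by
  rw [lik, lik, ← ENNReal.ofReal_mul (Real.exp_pos _).le,
    ← ENNReal.ofReal_mul (Real.exp_pos _).le, ← Real.exp_add, ← Real.exp_add]
  congr 2
  ring

lemma Valid.lintegral_hist_fst (hQ : Q.Valid) (s : ℝ) (x : Fin N → ℝ) {j : ℕ} (hj : j ≤ t)
    (f : (Fin j → Fin k → ℝ) → ℝ≥0∞) (hf : Measurable f) :
    ∫⁻ y, f (Q.hist (y + s • x) hj) ∂(_root_.stdGaussian (Fin N))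
      = ∫⁻ h, f h * Q.lik s hj h x ∂(histMeas k j) := by
  have e := hQ.lintegral_hist s x hj (fun p => f p.1) (hf.comp measurable_fst)
  simp only at e
  rw [e]
  refine lintegral_congr fun h => ?_
  rw [lintegral_const, measure_univ, mul_one]

lemma Valid.lintegral_lik (hQ : Q.Valid) (s : ℝ) (x : Fin N → ℝ) {j : ℕ} (hj : j ≤ t) :
    ∫⁻ h, Q.lik s hj h x ∂(histMeas k j) = 1 := by
  have e := hQ.lintegral_hist_fst s x hj (fun _ => 1) measurable_const
  simpa using e.symm

/-- Under the planted input, the law of the pair (history, plant) has density `lik` with respect to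
the product of independent Gaussian responses and the prior of the plant. -/
lemma Valid.measure_hist_plant {n : ℕ} {Q : QueryMaps (n * n) k t} (hQ : Q.Valid) {j : ℕ}
    (hj : j ≤ t) (s : ℝ) (μ : Measure ((Fin n → ℝ) × (Fin n → ℝ))) [IsProbabilityMeasure μ]
    (S : Set ((Fin j → Fin k → ℝ) × ((Fin n → ℝ) × (Fin n → ℝ)))) (hS : MeasurableSet S) :
    ((stdGaussianMat n).prod μ)
      {p | (Q.hist (vec n (Matrix.of p.1) + s • tensor p.2.1 p.2.2) hj, p.2) ∈ S}
      = ∫⁻ q, S.indicator (fun q => Q.lik s hj q.1 (tensor q.2.1 q.2.2)) q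
          ∂((histMeas k j).prod μ) := by
  have hpt : Measurable fun q : (Fin j → Fin k → ℝ) × ((Fin n → ℝ) × (Fin n → ℝ)) =>
      (q.1, tensor q.2.1 q.2.2) :=
    measurable_fst.prodMk (measurable_tensor.comp measurable_snd)
  have hlm : Measurable fun q : (Fin j → Fin k → ℝ) × ((Fin n → ℝ) × (Fin n → ℝ)) =>
      Q.lik s hj q.1 (tensor q.2.1 q.2.2) := by
    simpa only [Function.comp_def] using (hQ.measurable_lik s hj).comp hpt
  have hmap : Measurable fun p : (Fin n → Fin n → ℝ) × ((Fin n → ℝ) × (Fin n → ℝ)) =>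
      (Q.hist (vec n (Matrix.of p.1) + s • tensor p.2.1 p.2.2) hj, p.2) := by
    have hin : Measurable fun p : (Fin n → Fin n → ℝ) × ((Fin n → ℝ) × (Fin n → ℝ)) =>
        vec n (Matrix.of p.1) + s • tensor p.2.1 p.2.2 :=
      (measurable_vec_of.comp measurable_fst).add
        ((measurable_tensor.comp measurable_snd).const_smul s)
    have hh := (hQ.measurable_hist hj).comp hin
    simp only [Function.comp_def] at hh
    exact hh.prodMk measurable_snd
  have hE : MeasurableSet {p : (Fin n → Fin n → ℝ) × ((Fin n → ℝ) × (Fin n → ℝ)) |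
      (Q.hist (vec n (Matrix.of p.1) + s • tensor p.2.1 p.2.2) hj, p.2) ∈ S} := hmap hS
  rw [Measure.prod_apply_symm hE, lintegral_prod_symm _ (hlm.indicator hS).aemeasurable]
  refine lintegral_congr fun uv => ?_
  have hSuv : MeasurableSet {h | (h, uv) ∈ S} := measurable_prodMk_right hS
  have hmf : Measurable ({h | (h, uv) ∈ S}.indicator (1 : (Fin j → Fin k → ℝ) → ℝ≥0∞)) :=
    measurable_one.indicator hSuv
  have hy : Measurable fun y : Fin (n * n) → ℝ =>
      Q.hist (y + s • tensor uv.1 uv.2) hj := by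
    simpa only [Function.comp_def, id] using
      (hQ.measurable_hist hj).comp (measurable_id.add_const (s • tensor uv.1 uv.2))
  have e := hQ.lintegral_hist_fst s (tensor uv.1 uv.2) hj _ hmf
  have e1 := lintegral_map (μ := stdGaussianMat n) (hmf.comp hy) measurable_vec_of
  rw [map_vec_stdGaussianMat] at e1
  simp only [Function.comp_apply] at e1
  rw [e] at e1
  have e2 : ∀ h, {h | (h, uv) ∈ S}.indicator (1 : (Fin j → Fin k → ℝ) → ℝ≥0∞) h
        * Q.lik s hj h (tensor uv.1 uv.2)
      = S.indicator (fun q => Q.lik s hj q.1 (tensor q.2.1 q.2.2)) (h, uv) := by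
    intro h
    by_cases hh : (h, uv) ∈ S
    · rw [Set.indicator_of_mem hh, Set.indicator_of_mem (show h ∈ {h | (h, uv) ∈ S} from hh)]
      simp
    · rw [Set.indicator_of_notMem hh,
        Set.indicator_of_notMem (show h ∉ {h | (h, uv) ∈ S} from hh), zero_mul]
  simp_rw [e2] at e1
  rw [e1, ← lintegral_indicator_one (measurable_prodMk_right hE)]
  rfl

/-- Probability that the information is at most `T` after `j` rounds, exceeds `T'` after `j + 1`
rounds, and `u` has typical norm. The next query is determined by the history, so for a fixed
history the event has small prior probability by `prior_tail`; `truncated_likelihood` transfers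
this to the true law, the second moment being at most `exp (s² T)` on the event. -/
lemma Valid.step_bound {n : ℕ} {Q : QueryMaps (n * n) k t} (hQ : Q.Valid) (hn : 0 < n) {j : ℕ}
    (hj' : j ≤ t) (hj : j + 1 ≤ t) (s T T' b : ℝ) :
    ((stdGaussianMat n).prod ((_root_.stdGaussian (Fin n)).prod (_root_.stdGaussian (Fin n))))
      {p | Q.info hj' (Q.hist (vec n (Matrix.of p.1) + s • tensor p.2.1 p.2.2) hj')
              (tensor p.2.1 p.2.2) ≤ T
          ∧ T' < Q.info hj (Q.hist (vec n (Matrix.of p.1) + s • tensor p.2.1 p.2.2) hj)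
              (tensor p.2.1 p.2.2)
          ∧ sqNorm p.2.1 ≤ 6 * n}
      ≤ ENNReal.ofReal (Real.exp (s ^ 2 * T + 2 * b))
          * ENNReal.ofReal (Real.exp ((4 * ((j + 1) * k) - T') / (24 * n)))
        + 2 * ENNReal.ofReal (Real.exp (-b)) := by
  obtain ⟨S, hSmem⟩ : ∃ S : Set ((Fin j → Fin k → ℝ) × ((Fin n → ℝ) × (Fin n → ℝ))),
    ∀ q, q ∈ S ↔ Q.info hj' q.1 (tensor q.2.1 q.2.2) ≤ T
      ∧ T' < Q.info hj (app q.1 0) (tensor q.2.1 q.2.2) ∧ sqNorm q.2.1 ≤ 6 * n :=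
    ⟨{q | _}, fun q => Iff.rfl⟩
  have hpt : Measurable fun q : (Fin j → Fin k → ℝ) × ((Fin n → ℝ) × (Fin n → ℝ)) =>
      (q.1, tensor q.2.1 q.2.2) :=
    measurable_fst.prodMk (measurable_tensor.comp measurable_snd)
  have happ : Measurable fun q : (Fin j → Fin k → ℝ) × ((Fin n → ℝ) × (Fin n → ℝ)) =>
      app q.1 (0 : Fin k → ℝ) :=
    measurable_app.comp (measurable_fst.prodMk measurable_const)
  have hpa : Measurable fun q : (Fin j → Fin k → ℝ) × ((Fin n → ℝ) × (Fin n → ℝ)) =>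
      (app q.1 (0 : Fin k → ℝ), tensor q.2.1 q.2.2) :=
    happ.prodMk (measurable_tensor.comp measurable_snd)
  have hS : MeasurableSet S := by
    have m1 := (hQ.measurable_info hj').comp hpt
    have m2 := (hQ.measurable_info hj).comp hpa
    simp only [Function.comp_def] at m1 m2
    have m3 : Measurable fun q : (Fin j → Fin k → ℝ) × ((Fin n → ℝ) × (Fin n → ℝ)) =>
      sqNorm q.2.1 := measurable_sqNorm.comp (measurable_fst.comp measurable_snd)
    have hSeq := (measurableSet_le m1 (measurable_const (a := T))).inter
      ((measurableSet_lt (measurable_const (a := T')) m2).inter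
        (measurableSet_le m3 (measurable_const (a := 6 * (n : ℝ)))))
    convert hSeq using 1
    ext q
    exact hSmem q
  have hlm : ∀ s, Measurable fun q : (Fin j → Fin k → ℝ) × ((Fin n → ℝ) × (Fin n → ℝ)) =>
      Q.lik s hj' q.1 (tensor q.2.1 q.2.2) := fun s => by
    simpa only [Function.comp_def] using (hQ.measurable_lik s hj').comp hpt
  have hδ : ∀ h, ((_root_.stdGaussian (Fin n)).prod (_root_.stdGaussian (Fin n)))
      {x | (h, x) ∈ S}
      ≤ ENNReal.ofReal (Real.exp ((4 * ((j + 1) * k) - T') / (24 * n))) := by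
    intro h
    have hc : ((Fintype.card (Fin (j + 1) × Fin k) : ℕ) : ℝ) = (j + 1) * k := by simp
    have ht := prior_tail hn (Q.stack hj (app h 0)) (hQ.stack_orthonormal hj _) T'
    rw [hc] at ht
    refine (measure_mono fun x hx => ?_).trans ht
    have hx' := (hSmem _).1 hx
    refine ⟨?_, hx'.2.2⟩
    rw [sqNorm_stack_mulVec]
    exact hx'.2.1
  have h12 : ∀ p ∈ S, Q.lik s hj' p.1 (tensor p.2.1 p.2.2) * Q.lik s hj' p.1 (tensor p.2.1 p.2.2)
      ≤ ENNReal.ofReal (Real.exp (s ^ 2 * T)) * Q.lik (2 * s) hj' p.1 (tensor p.2.1 p.2.2) := by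
    intro p hp
    rw [lik_mul_self]
    refine mul_le_mul_left (ENNReal.ofReal_le_ofReal (Real.exp_le_exp.2 ?_)) _
    exact mul_le_mul_of_nonneg_left ((hSmem _).1 hp).1 (sq_nonneg s)
  have hone : ∀ (s : ℝ) (x : (Fin n → ℝ) × (Fin n → ℝ)),
      ∫⁻ h, Q.lik s hj' h (tensor x.1 x.2) ∂(histMeas k j) ≤ 1 :=
    fun s x => le_of_eq (hQ.lintegral_lik s (tensor x.1 x.2) hj')
  have key := truncated_likelihood (histMeas k j)
    ((_root_.stdGaussian (Fin n)).prod (_root_.stdGaussian (Fin n)))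
    (fun q => Q.lik s hj' q.1 (tensor q.2.1 q.2.2))
    (fun q => Q.lik (2 * s) hj' q.1 (tensor q.2.1 q.2.2)) (hlm s) (hlm (2 * s)) S hS
    (s ^ 2 * T) b _ (hone s) (hone (2 * s)) h12 hδ
  rw [← hQ.measure_hist_plant hj' s _ S hS] at key
  refine le_trans (measure_mono fun p hp => ?_) key
  refine (hSmem _).2 ⟨hp.1, ?_, hp.2.2⟩
  have h3 := hp.2.1
  rw [hist_succ, info_app] at h3
  rw [info_app]
  exact h3

end QueryMaps

/-! ### Numerical estimates and the union bound -/

/-- The bound of `QueryMaps.Valid.step_bound` for consecutive thresholds `360 k β ^ j`, where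
`β = 120 α² γ²`. With `A = s² T_j = 360 α² k β ^ j / n` the choice `b = γ² A` works, because
`T_{j+1} / (24 n) = 5 γ² A` and `(j + 1) k / (6 n) ≤ A`. -/
lemma step_numeric {n k : ℕ} {α γ : ℝ} (hn : 0 < n) (hk : n ≤ k) (hα : 10 ≤ α) (hγ : 1 ≤ γ)
    (j : ℕ) :
    ∃ b : ℝ, Real.exp ((α / Real.sqrt n) ^ 2 * (3 * 120 * k * (120 * α ^ 2 * γ ^ 2) ^ j) + 2 * b)
        * Real.exp ((4 * ((j + 1) * k) - 3 * 120 * k * (120 * α ^ 2 * γ ^ 2) ^ (j + 1)) / (24 * n))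
        + 2 * Real.exp (-b) ≤ (1 / 2) ^ j / (20 * γ) := by
  have hn' : (0 : ℝ) < n := by exact_mod_cast hn
  have hkn : (n : ℝ) ≤ k := by exact_mod_cast hk
  have hk' : (0 : ℝ) < k := hn'.trans_le hkn
  have hs : (α / Real.sqrt n) ^ 2 = α ^ 2 / n := by
    rw [div_pow, Real.sq_sqrt hn'.le]
  set B : ℝ := (120 * α ^ 2 * γ ^ 2) ^ j with hB
  have hα2 : 100 ≤ α ^ 2 := by nlinarith
  have hγ2 : γ ≤ γ ^ 2 := by nlinarith
  have hβ : 2 ≤ 120 * α ^ 2 * γ ^ 2 := by nlinarith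
  have hB2 : (2 : ℝ) ^ j ≤ B := pow_le_pow_left₀ (by norm_num) hβ j
  have hBj : (j : ℝ) + 1 ≤ B := by
    refine le_trans ?_ hB2
    exact_mod_cast Nat.lt_two_pow_self (n := j)
  have hBpos : 0 < B := lt_of_lt_of_le (by positivity) hB2
  set A : ℝ := α ^ 2 / n * (3 * 120 * k * B) with hA
  have hA1 : 36000 * B ≤ A := by
    have : A = 360 * α ^ 2 * B * (k / n) := by rw [hA]; ring
    rw [this]
    have h1 : 1 ≤ (k : ℝ) / n := (one_le_div hn').2 hkn
    calc 36000 * B ≤ 360 * α ^ 2 * B := by nlinarith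
      _ ≤ 360 * α ^ 2 * B * (k / n) := le_mul_of_one_le_right (by positivity) h1
  have hApos : 0 < A := lt_of_lt_of_le (by positivity) hA1
  have hAγ : A ≤ γ ^ 2 * A := le_mul_of_one_le_left hApos.le (hγ.trans hγ2)
  refine ⟨γ ^ 2 * A, ?_⟩
  rw [hs, ← Real.exp_add, ← hA]
  have hexp : A + 2 * (γ ^ 2 * A)
      + (4 * ((j + 1) * k) - 3 * 120 * k * (120 * α ^ 2 * γ ^ 2) ^ (j + 1)) / (24 * n)
      ≤ -(γ ^ 2 * A) := by
    have e : (4 * ((j + 1) * k) - 3 * 120 * k * (120 * α ^ 2 * γ ^ 2) ^ (j + 1)) / (24 * n)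
        = ((j + 1) * k) / (6 * n) - 5 * (γ ^ 2 * A) := by
      rw [pow_succ, ← hB, hA]
      field_simp
      ring
    have h2 : ((j : ℝ) + 1) * k / (6 * n) ≤ A := by
      calc ((j : ℝ) + 1) * k / (6 * n) ≤ B * k / (6 * n) := by gcongr
        _ = (1 / 6) * (k / n * B) := by field_simp
        _ ≤ (α ^ 2 * 360) * (k / n * B) := by
            gcongr
            linarith
        _ = A := by rw [hA]; ring
    rw [e]
    linarith
  have hb : 36000 * γ * 2 ^ j ≤ γ ^ 2 * A := by
    calc 36000 * γ * 2 ^ j = γ * (36000 * 2 ^ j) := by ring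
      _ ≤ γ ^ 2 * (36000 * B) := by gcongr
      _ ≤ γ ^ 2 * A := by gcongr
  have hbpos : 0 < 36000 * γ * 2 ^ j := by positivity
  have hneg : Real.exp (-(γ ^ 2 * A)) ≤ 1 / (36000 * γ * 2 ^ j) := by
    rw [Real.exp_neg, one_div]
    refine inv_anti₀ hbpos ?_
    linarith [Real.add_one_le_exp (γ ^ 2 * A)]
  have := Real.exp_le_exp.2 hexp
  calc _ ≤ 3 * Real.exp (-(γ ^ 2 * A)) := by linarith
    _ ≤ 3 * (1 / (36000 * γ * 2 ^ j)) := by gcongr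
    _ ≤ (1 / 2) ^ j / (20 * γ) := by
      rw [div_pow, one_pow, div_div, mul_one_div, div_le_div_iff₀ hbpos (by positivity)]
      have : 0 < 2 ^ j * γ := by positivity
      nlinarith

lemma total_failure_le {n t : ℕ} {γ : ℝ} (hγ : 1 ≤ γ) :
    (1 - 1 / (10 * γ)) ^ t - (n : ℝ)⁻¹
      ≤ 1 - ((n : ℝ)⁻¹ + ∑ j : Fin t, (1 / 2 : ℝ) ^ (j : ℕ) / (20 * γ)) := by
  have hx0 : 0 ≤ 1 / (10 * γ) := by positivity
  have hx1 : 1 / (10 * γ) ≤ 1 := by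
    rw [div_le_one (by positivity)]; linarith
  rcases Nat.eq_zero_or_pos t with rfl | ht
  · simp
  have hpow : (1 - 1 / (10 * γ)) ^ t ≤ 1 - 1 / (10 * γ) :=
    pow_le_of_le_one (by linarith) (by linarith) ht.ne'
  have hsum : ∑ j : Fin t, (1 / 2 : ℝ) ^ (j : ℕ) / (20 * γ) ≤ 1 / (10 * γ) := by
    rw [Fin.sum_univ_eq_sum_range (fun j => (1 / 2 : ℝ) ^ j / (20 * γ)) t, ← Finset.sum_div]
    have : ∑ j ∈ Finset.range t, (1 / 2 : ℝ) ^ j ≤ 2 := sum_geometric_two_le t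
    rw [div_le_div_iff₀ (by positivity) (by positivity)]
    nlinarith
  linarith

/-- Main lemma: information growth bound for deterministic adaptive algorithms
on the rank-one planted Gaussian instance (Lemma 3.1 of the paper). -/
theorem rank_one_plant_information_bound :
    ∃ (K C₁ C₂ c : ℝ), 1 ≤ K ∧ 1 ≤ C₁ ∧ 1 ≤ C₂ ∧ 0 < c ∧
      ∀ (n k t : ℕ) (α γ : ℝ), 2 ≤ n → n ≤ k → 10 ≤ α → 1 ≤ γ →
      ∀ Q : QueryMaps (n * n) k t, Q.Valid →
      C₁ * k * Real.log n ≤ (K * α ^ 2 * γ ^ 2) ^ t * k →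
      (K * α ^ 2 * γ ^ 2) ^ t * k ≤ C₂ * (n : ℝ) ^ 2 →
      ENNReal.ofReal ((1 - 1 / (10 * γ)) ^ t - (n : ℝ) ^ (-c)) ≤
        ((stdGaussianMat n).prod ((stdGaussian (Fin n)).prod (stdGaussian (Fin n))))
          {p | sqNorm ((QueryMaps.runMat Q
                  (vec n (Matrix.of p.1) +
                    (α / Real.sqrt n) • tensor p.2.1 p.2.2)).mulVec
                (tensor p.2.1 p.2.2))
              ≤ 3 * K * k * (K * α ^ 2 * γ ^ 2) ^ t} := by
  refine ⟨120, 1, 1, 1, by norm_num, le_rfl, le_rfl, one_pos, ?_⟩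
  intro n k t α γ hn2 hk hα hγ Q hQ _ _
  have hn : 0 < n := by omega
  have hn' : (0 : ℝ) < n := by exact_mod_cast hn
  rw [Real.rpow_neg_one]
  set s : ℝ := α / Real.sqrt n with hs
  set Pr := (stdGaussianMat n).prod
    ((_root_.stdGaussian (Fin n)).prod (_root_.stdGaussian (Fin n))) with hPr
  simp only [QueryMaps.sqNorm_runMat_mulVec]
  set T : ℕ → ℝ := fun j => 3 * 120 * k * (120 * α ^ 2 * γ ^ 2) ^ j with hT
  set J : ∀ j, j ≤ t → ((Fin n → Fin n → ℝ) × ((Fin n → ℝ) × (Fin n → ℝ))) → ℝ := fun j hj p =>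
    Q.info hj (Q.hist (vec n (Matrix.of p.1) + s • tensor p.2.1 p.2.2) hj)
      (tensor p.2.1 p.2.2) with hJ
  change _ ≤ Pr {p | J t le_rfl p ≤ T t}
  -- failure in round `j`: the threshold holds after `j` rounds and is exceeded after `j + 1`
  set F : Fin t → Set ((Fin n → Fin n → ℝ) × ((Fin n → ℝ) × (Fin n → ℝ))) := fun j =>
    {p | J j j.2.le p ≤ T j ∧ T (j + 1) < J (j + 1) j.2 p ∧ sqNorm p.2.1 ≤ 6 * n} with hF
  set U : Set ((Fin n → Fin n → ℝ) × ((Fin n → ℝ) × (Fin n → ℝ))) :=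
    {p | 6 * (n : ℝ) < sqNorm p.2.1} with hU
  have hUm : Pr U ≤ ENNReal.ofReal ((n : ℝ)⁻¹) := by
    have e : U = Set.univ ×ˢ ({u | 6 * (n : ℝ) < sqNorm u} ×ˢ Set.univ) := by
      ext p; simp [hU]
    rw [e, hPr, Measure.prod_prod, Measure.prod_prod, measure_univ, measure_univ, one_mul, mul_one]
    exact sqNorm_tail hn
  have hFm : ∀ j, Pr (F j) ≤ ENNReal.ofReal ((1 / 2 : ℝ) ^ (j : ℕ) / (20 * γ)) := by
    intro j
    obtain ⟨b, hb⟩ := step_numeric hn hk hα hγ (j : ℕ)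
    refine (hQ.step_bound hn j.2.le j.2 s (T j) (T (j + 1)) b).trans ?_
    refine le_trans (le_of_eq ?_) (ENNReal.ofReal_le_ofReal hb)
    rw [ENNReal.ofReal_add (by positivity) (by positivity), ENNReal.ofReal_mul (by positivity),
      ENNReal.ofReal_mul (p := 2) (by norm_num), ENNReal.ofReal_ofNat]
  have hcover : {p | J t le_rfl p ≤ T t}ᶜ ⊆ U ∪ ⋃ j, F j := by
    intro p hp
    by_contra hcon
    simp only [Set.mem_union, Set.mem_iUnion, not_or, not_exists] at hcon
    have hu : sqNorm p.2.1 ≤ 6 * n := not_lt.1 hcon.1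
    have hall : ∀ j (hj : j ≤ t), J j hj p ≤ T j := by
      intro j
      induction j with
      | zero =>
        intro hj
        have h0 : J 0 hj p = 0 := by simp [hJ, QueryMaps.info]
        rw [h0]
        simp only [hT]
        positivity
      | succ j ih =>
        intro hj
        by_contra hlt
        exact hcon.2 ⟨j, hj⟩ ⟨ih _, not_le.1 hlt, hu⟩
    exact hp (hall t le_rfl)
  have hbad : Pr {p | J t le_rfl p ≤ T t}ᶜ
      ≤ ENNReal.ofReal ((n : ℝ)⁻¹ + ∑ j : Fin t, (1 / 2 : ℝ) ^ (j : ℕ) / (20 * γ)) := by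
    have hnn : ∀ j : Fin t, 0 ≤ (1 / 2 : ℝ) ^ (j : ℕ) / (20 * γ) := fun j => by positivity
    rw [ENNReal.ofReal_add (by positivity) (Finset.sum_nonneg fun j _ => hnn j),
      ENNReal.ofReal_sum_of_nonneg fun j _ => hnn j]
    calc _ ≤ Pr (U ∪ ⋃ j, F j) := measure_mono hcover
      _ ≤ Pr U + Pr (⋃ j, F j) := measure_union_le _ _
      _ ≤ _ := add_le_add hUm ((measure_iUnion_fintype_le _ _).trans
          (Finset.sum_le_sum fun j _ => hFm j))
  have hone : 1 ≤ Pr {p | J t le_rfl p ≤ T t} + Pr {p | J t le_rfl p ≤ T t}ᶜ := by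
    calc (1 : ℝ≥0∞) = Pr Set.univ := measure_univ.symm
      _ = Pr ({p | J t le_rfl p ≤ T t} ∪ {p | J t le_rfl p ≤ T t}ᶜ) := by rw [Set.union_compl_self]
      _ ≤ _ := measure_union_le _ _
  refine (ENNReal.ofReal_le_ofReal (total_failure_le hγ)).trans ?_
  rw [ENNReal.ofReal_sub _ (by positivity), ENNReal.ofReal_one, tsub_le_iff_right]
  exact hone.trans (by gcongr)

end
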